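/- Let n ≥ 1 and m ≥ 2 be integers, k = m + n, and s > 0. Then lim_{L → +∞} Y²_per(L) = 2^{2/k} · Y_{n,k}(s). (This is Theorem 2 of the paper — lim_{t→+∞} Y²_N(M × N, g + th) = 2^{2/(m+n)} Y_{ℝⁿ}(M × ℝⁿ, g + g_e) for (M^m, g) closed of constant positive scalar curvature — in the case where N is the flat torus ℝⁿ/ℤⁿ, for which scaling the metric by t corresponds to enlarging the period to L = √t, and M has unit volume.) -/

import Mathlib

/-!
Write `p = p_k` and call `N(v) = ∫ (a_k |∇v|² + s v²)` the energy. The number `2^{2/k} Y` is what two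
equal bubbles without interaction cost; both inequalities hold at the level of test functions, so
that neither minimizers nor Sobolev embeddings are needed.

*Upper bound.* Two far apart translates `φ₁`, `φ₂` of a test function `φ` fit into one period box
once `L` is large. The plane spanned by their periodizations `ψ₁`, `ψ₂`, with the weight
`√(ψ₁² + ψ₂² + δ²)`, is admissible. Every element of it has energy at most `N(φ) / ∫ |φ|^p` times its
weighted norm, and the mass of the weight tends to `2 ∫ |φ|^p` as `δ → 0`; since
`2/k - 1 = -2/p`, the value is at most `2^{2/k} N(φ) / (∫ |φ|^p)^{2/p}` in the limit
(`two_bumps_mem`, `eventually_exists_mem_lt`).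

*Lower bound.* Fix `0 ≤ C < Y`. For large `L` every smooth periodic `w` satisfies
`C (∫ |w|^p)^{2/p} ≤ N(w)` over a period (`eventually_periodic_sobolev`): multiply by a cutoff that
fills most of the box and has small gradient, whose derivative is absorbed by the term `s w²`, after
choosing by averaging a translate of `w` that keeps most of its `L^p` mass. Given an admissible
pair `(u, V)`, a Borsuk–Ulam argument on the unit circle of `V` provides `v ∈ V` for which each of
`{v > 0}` and `{v < 0}` carries at most half of the mass `T = ∫ u^p` (`exists_balanced`). Hölder's
inequality on these two sets gives `∫ u^{p-2} v_±² ≤ (T/2)^{2/k} (∫ v_±^p)^{2/p}`, and the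
Sobolev-type inequality for `v_±`, which follows by smoothing the positive part
(`sobolev_pos_neg`), yields `C 2^{2/k} ≤ N(v) / (∫ u^{p-2} v²) · T^{2/k}`
(`rayleigh_ge_of_balanced`). The supremum over `V` dominates this value because the Rayleigh
quotients over a plane are bounded above (`bddAbove_rayleigh`), so that `sSup` is a true supremum.
-/

open MeasureTheory

noncomputable section

/-- The constant `a_k = 4(k-1)/(k-2)`. -/
def aK (k : ℕ) : ℝ := 4 * ((k : ℝ) - 1) / ((k : ℝ) - 2)

/-- The critical exponent `p_k = 2k/(k-2)`. -/
def pK (k : ℕ) : ℝ := 2 * (k : ℝ) / ((k : ℝ) - 2)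

/-- Numerator of the Yamabe-type functional: `∫ (a_k |∇u|² + s u²) dx` on `ℝⁿ`. -/
def yNum (n k : ℕ) (s : ℝ) (u : EuclideanSpace ℝ (Fin n) → ℝ) : ℝ :=
  ∫ x, (aK k * ‖gradient u x‖ ^ 2 + s * (u x) ^ 2)

/-- Values of the Yamabe-type functional over nonzero test functions. -/
def yamabeSet (n k : ℕ) (s : ℝ) : Set ℝ :=
  {r | ∃ u : EuclideanSpace ℝ (Fin n) → ℝ,
    ContDiff ℝ (⊤ : ℕ∞) u ∧ HasCompactSupport u ∧ u ≠ 0 ∧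
    r = yNum n k s u / (∫ x, |u x| ^ pK k) ^ (2 / pK k)}

/-- The Euclidean Yamabe-type constant `Y_{n,k}(s)`. -/
def yamabeConst (n k : ℕ) (s : ℝ) : ℝ := sInf (yamabeSet n k s)

/-- Values of the min-max functional defining the `l`-th Euclidean Yamabe-type constant:
for admissible pairs `(u, V)` with `u ≥ 0` measurable, compactly supported, with
`0 < ∫ u^{p_k} < ∞`, and `V` an `l`-dimensional space of smooth compactly supported
functions on which the weighted `L²` pairing is positive definite, take the sup over
`v ∈ V \ {0}` of the generalized Rayleigh quotient times `(∫ u^{p_k})^{2/k}`. -/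
def yamabeLSet (n k : ℕ) (s : ℝ) (l : ℕ) : Set ℝ :=
  {r | ∃ (u : EuclideanSpace ℝ (Fin n) → ℝ)
        (V : Submodule ℝ (EuclideanSpace ℝ (Fin n) → ℝ)),
    Measurable u ∧ (∀ x, 0 ≤ u x) ∧ HasCompactSupport u ∧
    Integrable (fun x => u x ^ pK k) ∧ (0 < ∫ x, u x ^ pK k) ∧
    Module.finrank ℝ V = l ∧
    (∀ v ∈ V, ContDiff ℝ (⊤ : ℕ∞) v ∧ HasCompactSupport v) ∧
    (∀ v ∈ V, v ≠ 0 → 0 < ∫ x, u x ^ (pK k - 2) * (v x) ^ 2) ∧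
    r = sSup {t | ∃ v ∈ V, v ≠ 0 ∧
      t = (yNum n k s v / ∫ x, u x ^ (pK k - 2) * (v x) ^ 2) *
          (∫ x, u x ^ pK k) ^ (2 / (k : ℝ))}}

/-- The `l`-th Euclidean Yamabe-type constant `Y^l_{n,k}(s)`. -/
def yamabeLConst (n k : ℕ) (s : ℝ) (l : ℕ) : ℝ := sInf (yamabeLSet n k s l)

/-- `u : ℝⁿ → ℝ` is `L`-periodic: invariant under the translation by `L·eᵢ` for every
standard basis vector `eᵢ`. -/
def IsPeriodicFun (n : ℕ) (L : ℝ) (u : EuclideanSpace ℝ (Fin n) → ℝ) : Prop :=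
  ∀ (x : EuclideanSpace ℝ (Fin n)) (i : Fin n),
    u (x + L • EuclideanSpace.single i 1) = u x

/-- The fundamental domain `[0, L)ⁿ ⊆ ℝⁿ`. -/
def periodBox (n : ℕ) (L : ℝ) : Set (EuclideanSpace ℝ (Fin n)) :=
  {x | ∀ i, x i ∈ Set.Ico (0 : ℝ) L}

/-- Values of the Yamabe-type functional over nonzero smooth `L`-periodic functions,
with integrals over the fundamental domain `[0,L)ⁿ`. -/
def yPerSet (n k : ℕ) (s L : ℝ) : Set ℝ :=
  {r | ∃ u : EuclideanSpace ℝ (Fin n) → ℝ,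
    ContDiff ℝ (⊤ : ℕ∞) u ∧ IsPeriodicFun n L u ∧ u ≠ 0 ∧
    r = (∫ x in periodBox n L, (aK k * ‖gradient u x‖ ^ 2 + s * (u x) ^ 2)) /
        (∫ x in periodBox n L, |u x| ^ pK k) ^ (2 / pK k)}

/-- The periodic Yamabe constant `Y_per(L)`. -/
def yPer (n k : ℕ) (s L : ℝ) : ℝ := sInf (yPerSet n k s L)

/-- Values of the min-max functional defining the second periodic Yamabe constant:
pairs `(u, V)` with `u` smooth, positive and `L`-periodic and `V` a `2`-dimensional
subspace of smooth `L`-periodic functions. -/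
def y2PerSet (n k : ℕ) (s L : ℝ) : Set ℝ :=
  {r | ∃ (u : EuclideanSpace ℝ (Fin n) → ℝ)
        (V : Submodule ℝ (EuclideanSpace ℝ (Fin n) → ℝ)),
    ContDiff ℝ (⊤ : ℕ∞) u ∧ IsPeriodicFun n L u ∧ (∀ x, 0 < u x) ∧
    Module.finrank ℝ V = 2 ∧
    (∀ v ∈ V, ContDiff ℝ (⊤ : ℕ∞) v ∧ IsPeriodicFun n L v) ∧
    r = sSup {t | ∃ v ∈ V, v ≠ 0 ∧
      t = ((∫ x in periodBox n L, (aK k * ‖gradient v x‖ ^ 2 + s * (v x) ^ 2)) /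
           (∫ x in periodBox n L, u x ^ (pK k - 2) * (v x) ^ 2)) *
          (∫ x in periodBox n L, u x ^ pK k) ^ (2 / (k : ℝ))}}

/-- The second periodic Yamabe constant `Y²_per(L)`. -/
def y2Per (n k : ℕ) (s L : ℝ) : ℝ := sInf (y2PerSet n k s L)


/-! ### Exponents and gradients -/

lemma pK_gt_two {k : ℕ} (hk : 3 ≤ k) : 2 < pK k := by
  have h : (3 : ℝ) ≤ k := by exact_mod_cast hk
  unfold pK
  rw [lt_div_iff₀ (by linarith)]
  linarith

lemma two_div_pK {k : ℕ} (hk : 3 ≤ k) : 2 / pK k = 1 - 2 / (k : ℝ) := by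
  have h : (3 : ℝ) ≤ k := by exact_mod_cast hk
  have h2 : (k : ℝ) - 2 ≠ 0 := by linarith
  have h3 : (k : ℝ) ≠ 0 := by linarith
  unfold pK
  field_simp

lemma aK_pos {k : ℕ} (hk : 3 ≤ k) : 0 < aK k := by
  have h : (3 : ℝ) ≤ k := by exact_mod_cast hk
  unfold aK
  apply div_pos <;> linarith

lemma norm_gradient_eq {n : ℕ} (f : EuclideanSpace ℝ (Fin n) → ℝ)
    (x : EuclideanSpace ℝ (Fin n)) : ‖gradient f x‖ = ‖fderiv ℝ f x‖ := by
  simp [gradient]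

/-- The energy density `a_k |∇v|² + s v²`. -/
def eDens (n k : ℕ) (s : ℝ) (v : EuclideanSpace ℝ (Fin n) → ℝ)
    (x : EuclideanSpace ℝ (Fin n)) : ℝ :=
  aK k * ‖gradient v x‖ ^ 2 + s * (v x) ^ 2

lemma eDens_nonneg {n k : ℕ} {s : ℝ} (hk : 3 ≤ k) (hs : 0 < s)
    (v : EuclideanSpace ℝ (Fin n) → ℝ) (x : EuclideanSpace ℝ (Fin n)) :
    0 ≤ eDens n k s v x := by
  have := aK_pos hk
  unfold eDens
  positivity

lemma eDens_continuous {n k : ℕ} {s : ℝ} {v : EuclideanSpace ℝ (Fin n) → ℝ}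
    (hv : ContDiff ℝ (⊤ : ℕ∞) v) : Continuous (eDens n k s v) := by
  have h1 : Continuous (fderiv ℝ v) := hv.continuous_fderiv (by simp)
  have h2 : Continuous v := hv.continuous
  unfold eDens
  simp only [norm_gradient_eq]
  fun_prop

/-! ### The period box as a fundamental domain -/

/-- The basis `L • eᵢ` of `ℝⁿ`, which spans the period lattice. -/
def perBasis (n : ℕ) (L : ℝ) (hL : 0 < L) :
    Module.Basis (Fin n) ℝ (EuclideanSpace ℝ (Fin n)) :=
  (EuclideanSpace.basisFun (Fin n) ℝ).toBasis.isUnitSMul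
    (w := fun _ => L) (fun _ => hL.ne'.isUnit)

/-- The period lattice `(Lℤ)ⁿ`. -/
def perLat (n : ℕ) (L : ℝ) (hL : 0 < L) : Submodule ℤ (EuclideanSpace ℝ (Fin n)) :=
  Submodule.span ℤ (Set.range (perBasis n L hL))

lemma perBasis_repr {n : ℕ} {L : ℝ} (hL : 0 < L) (x : EuclideanSpace ℝ (Fin n)) (i : Fin n) :
    (perBasis n L hL).repr x i = L⁻¹ * x i := by
  rw [perBasis, Module.Basis.repr_isUnitSMul]
  simp [Units.smul_def]

lemma fundamentalDomain_perBasis {n : ℕ} {L : ℝ} (hL : 0 < L) :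
    ZSpan.fundamentalDomain (perBasis n L hL) = periodBox n L := by
  ext x
  simp only [ZSpan.mem_fundamentalDomain, periodBox, Set.mem_ofPred_eq, perBasis_repr, Set.mem_Ico]
  refine forall_congr' fun i => ?_
  rw [inv_mul_lt_iff₀ hL, mul_one]
  refine and_congr_left fun _ => ?_
  constructor
  · intro h
    have := mul_nonneg hL.le h
    rwa [mul_inv_cancel_left₀ hL.ne'] at this
  · intro h
    positivity

lemma periodic_lattice {n : ℕ} {L : ℝ} (hL : 0 < L) {f : EuclideanSpace ℝ (Fin n) → ℝ}
    (hf : IsPeriodicFun n L f) {z : EuclideanSpace ℝ (Fin n)} (hz : z ∈ perLat n L hL)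
    (x : EuclideanSpace ℝ (Fin n)) : f (x + z) = f x := by
  unfold perLat at hz
  induction hz using Submodule.span_induction generalizing x with
  | mem y hy =>
    obtain ⟨i, rfl⟩ := hy
    have : perBasis n L hL i = L • EuclideanSpace.single i 1 := by
      simp [perBasis, Module.Basis.isUnitSMul_apply]
    rw [this]
    exact hf x i
  | zero => simp
  | add y z _ _ hy hz => rw [← add_assoc, hz, hy]
  | smul c y _ hy =>
    have key : ∀ (m : ℕ) (x : EuclideanSpace ℝ (Fin n)), f (x + m • y) = f x := by
      intro m
      induction m with
      | zero => simp
      | succ m ih => intro x; rw [succ_nsmul, ← add_assoc, hy, ih]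
    obtain ⟨m, rfl | rfl⟩ := c.eq_nat_or_neg
    · simpa using key m x
    · have := key m (x + (-(m : ℤ)) • y)
      rw [← this]
      congr 1
      simp

lemma measurableSet_periodBox (n : ℕ) {L : ℝ} (hL : 0 < L) : MeasurableSet (periodBox n L) := by
  rw [← fundamentalDomain_perBasis hL]
  exact ZSpan.fundamentalDomain_measurableSet _

lemma isBounded_periodBox (n : ℕ) {L : ℝ} (hL : 0 < L) :
    Bornology.IsBounded (periodBox n L) := by
  rw [← fundamentalDomain_perBasis hL]
  exact ZSpan.fundamentalDomain_isBounded _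

lemma volume_periodBox_lt_top (n : ℕ) {L : ℝ} (hL : 0 < L) : volume (periodBox n L) < ⊤ :=
  (isBounded_periodBox n hL).measure_lt_top

open scoped Pointwise in
/-- A periodic function has the same integral over every translate of the period box. -/
lemma setIntegral_periodBox_translate {n : ℕ} {L : ℝ} (hL : 0 < L)
    {f : EuclideanSpace ℝ (Fin n) → ℝ} (hf : IsPeriodicFun n L f)
    (y : EuclideanSpace ℝ (Fin n)) :
    ∫ x in periodBox n L, f (x + y) = ∫ x in periodBox n L, f x := by
  have h1 := ZSpan.isAddFundamentalDomain' (perBasis n L hL) volume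
  have h2 := h1.vadd_of_comm y
  have : Countable (Submodule.span ℤ (Set.range (perBasis n L hL))).toAddSubgroup :=
    TopologicalSpace.separableSpace_iff_countable.mp inferInstance
  have h3 := h2.setIntegral_eq h1 (f := f) (fun g x => by
    have := periodic_lattice hL hf g.2 x
    rw [add_comm] at this
    exact this)
  rw [fundamentalDomain_perBasis] at h3
  rw [← h3]
  have hmp : MeasurePreserving (fun x : EuclideanSpace ℝ (Fin n) => y + x) volume volume :=
    measurePreserving_add_left volume y
  have := hmp.setIntegral_preimage_emb (measurableEmbedding_addLeft y) f (y +ᵥ periodBox n L)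
  rw [← this]
  have hs : (fun x => y + x) ⁻¹' (y +ᵥ periodBox n L) = periodBox n L := by
    ext x
    rw [Set.mem_preimage, ← vadd_eq_add, Set.vadd_mem_vadd_set_iff]
  rw [hs]
  simp only [add_comm]

lemma integrableOn_periodBox {n : ℕ} {L : ℝ} (hL : 0 < L)
    {f : EuclideanSpace ℝ (Fin n) → ℝ} (hf : Continuous f) :
    IntegrableOn f (periodBox n L) := by
  have h := (isBounded_periodBox n hL).isCompact_closure
  exact (hf.continuousOn.integrableOn_compact h).mono_set subset_closure

lemma bounded_on_periodBox {n : ℕ} {L : ℝ} (hL : 0 < L)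
    {f : EuclideanSpace ℝ (Fin n) → ℝ} (hf : Continuous f) :
    ∃ C, 0 ≤ C ∧ ∀ x ∈ periodBox n L, |f x| ≤ C := by
  have h := (isBounded_periodBox n hL).isCompact_closure
  obtain ⟨C, hC⟩ := h.exists_bound_of_continuousOn hf.continuousOn
  exact ⟨max C 0, le_max_right _ _, fun x hx => (hC x (subset_closure hx)).trans (le_max_left _ _)⟩

/-- The open box `(0, L)ⁿ`. -/
def openBox (n : ℕ) (L : ℝ) : Set (EuclideanSpace ℝ (Fin n)) :=
  {x | ∀ i, x i ∈ Set.Ioo (0 : ℝ) L}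

lemma isOpen_openBox (n : ℕ) (L : ℝ) : IsOpen (openBox n L) := by
  have : openBox n L = ⋂ i, (fun x : EuclideanSpace ℝ (Fin n) => x i) ⁻¹' Set.Ioo 0 L := by
    ext x; simp [openBox]
  rw [this]
  exact isOpen_iInter_of_finite fun i => isOpen_Ioo.preimage (by fun_prop)

lemma openBox_subset (n : ℕ) (L : ℝ) : openBox n L ⊆ periodBox n L :=
  fun _ hx i => ⟨(hx i).1.le, (hx i).2⟩

/-- A nonzero continuous nonnegative periodic function has positive integral over the box. -/
lemma setIntegral_periodBox_pos {n : ℕ} {L : ℝ} (hL : 0 < L)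
    {f : EuclideanSpace ℝ (Fin n) → ℝ} (hf : IsPeriodicFun n L f) (hc : Continuous f)
    (h0 : ∀ x, 0 ≤ f x) {x₀ : EuclideanSpace ℝ (Fin n)} (hx : f x₀ ≠ 0) :
    0 < ∫ x in periodBox n L, f x := by
  -- translate so that the point where `f ≠ 0` becomes the centre of the box
  let c : EuclideanSpace ℝ (Fin n) := WithLp.toLp 2 (fun _ => L / 2)
  have hcc : c ∈ openBox n L := by
    intro i
    simp only [c, Set.mem_Ioo]
    constructor <;> linarith
  rw [← setIntegral_periodBox_translate hL hf (x₀ - c)]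
  have hc' : Continuous fun x => f (x + (x₀ - c)) := by fun_prop
  rw [setIntegral_pos_iff_support_of_nonneg_ae (Filter.Eventually.of_forall fun x => h0 _)
    (integrableOn_periodBox hL hc')]
  have ho : IsOpen (Function.support (fun x => f (x + (x₀ - c))) ∩ openBox n L) :=
    (hc'.isOpen_support).inter (isOpen_openBox n L)
  refine lt_of_lt_of_le (ho.measure_pos volume ⟨c, ?_, hcc⟩)
    (measure_mono (Set.inter_subset_inter_right _ (openBox_subset n L)))
  simpa using hx

/-! ### Periodization of test functions -/

/-- The `L`-periodic function agreeing with `φ` on the period box. -/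
def periodize {n : ℕ} {L : ℝ} (hL : 0 < L) (φ : EuclideanSpace ℝ (Fin n) → ℝ) :
    EuclideanSpace ℝ (Fin n) → ℝ :=
  fun x => φ (ZSpan.fract (perBasis n L hL) x)

lemma periodize_periodic {n : ℕ} {L : ℝ} (hL : 0 < L) (φ : EuclideanSpace ℝ (Fin n) → ℝ) :
    IsPeriodicFun n L (periodize hL φ) := by
  intro x i
  have h : L • EuclideanSpace.single i (1 : ℝ) ∈ Submodule.span ℤ (Set.range (perBasis n L hL)) := by
    apply Submodule.subset_span
    exact ⟨i, by simp [perBasis, Module.Basis.isUnitSMul_apply]⟩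
  unfold periodize
  rw [ZSpan.fract_add_ZSpan _ _ h]

lemma periodize_eq_of_mem {n : ℕ} {L : ℝ} (hL : 0 < L) (φ : EuclideanSpace ℝ (Fin n) → ℝ)
    {x z : EuclideanSpace ℝ (Fin n)} (hz : z ∈ perLat n L hL) (hx : x - z ∈ periodBox n L) :
    periodize hL φ x = φ (x - z) := by
  unfold periodize
  have h1 : ZSpan.fract (perBasis n L hL) x = ZSpan.fract (perBasis n L hL) (x - z) := by
    conv_lhs => rw [← sub_add_cancel x z]
    exact ZSpan.fract_add_ZSpan _ _ hz
  rw [h1, (ZSpan.fract_eq_self (b := perBasis n L hL)).2]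
  rwa [fundamentalDomain_perBasis]

open scoped Pointwise in
lemma isClosed_support_add_lat {n : ℕ} {L : ℝ} (hL : 0 < L)
    {φ : EuclideanSpace ℝ (Fin n) → ℝ} (hc : HasCompactSupport φ) :
    IsClosed (tsupport φ + (perLat n L hL : Set (EuclideanSpace ℝ (Fin n)))) := by
  have : IsClosed ((perLat n L hL).toAddSubgroup : Set (EuclideanSpace ℝ (Fin n))) :=
    AddSubgroup.isClosed_of_discrete (H := (Submodule.span ℤ (Set.range (perBasis n L hL))).toAddSubgroup)
  exact IsClosed.add_left_of_isCompact this hc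

open scoped Pointwise in
/-- Away from the lattice translates of the support, the periodization vanishes locally. -/
lemma periodize_eventually_zero {n : ℕ} {L : ℝ} (hL : 0 < L)
    {φ : EuclideanSpace ℝ (Fin n) → ℝ} (hc : HasCompactSupport φ)
    {x : EuclideanSpace ℝ (Fin n)}
    (hx : x ∉ tsupport φ + (perLat n L hL : Set (EuclideanSpace ℝ (Fin n)))) :
    periodize hL φ =ᶠ[nhds x] fun _ => 0 := by
  have ho := (isClosed_support_add_lat hL hc).isOpen_compl
  filter_upwards [ho.mem_nhds hx] with y hy
  by_contra hne
  apply hy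
  refine ⟨ZSpan.fract (perBasis n L hL) y, subset_tsupport _ hne,
    (ZSpan.floor (perBasis n L hL) y : EuclideanSpace ℝ (Fin n)),
    (ZSpan.floor (perBasis n L hL) y).2, ?_⟩
  simp [ZSpan.fract_apply]

lemma periodize_eventually_eq {n : ℕ} {L : ℝ} (hL : 0 < L)
    {φ : EuclideanSpace ℝ (Fin n) → ℝ} (hsub : tsupport φ ⊆ openBox n L)
    {κ z : EuclideanSpace ℝ (Fin n)} (hκ : κ ∈ tsupport φ) (hz : z ∈ perLat n L hL) :
    periodize hL φ =ᶠ[nhds (κ + z)] fun y => φ (y - z) := by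
  have h1 : ∀ᶠ y in nhds (κ + z), y - z ∈ openBox n L := by
    apply (continuous_id.sub continuous_const).continuousAt.eventually_mem
    apply (isOpen_openBox n L).mem_nhds
    simpa using hsub hκ
  filter_upwards [h1] with y hy
  exact periodize_eq_of_mem hL φ hz (openBox_subset n L hy)

open scoped Pointwise in
lemma periodize_contDiff {n : ℕ} {L : ℝ} (hL : 0 < L)
    {φ : EuclideanSpace ℝ (Fin n) → ℝ} (hs : ContDiff ℝ (⊤ : ℕ∞) φ)
    (hc : HasCompactSupport φ) (hsub : tsupport φ ⊆ openBox n L) :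
    ContDiff ℝ (⊤ : ℕ∞) (periodize hL φ) := by
  rw [contDiff_iff_contDiffAt]
  intro x
  by_cases hx : x ∈ tsupport φ + (perLat n L hL : Set (EuclideanSpace ℝ (Fin n)))
  · obtain ⟨κ, hκ, z, hz, rfl⟩ := hx
    refine ContDiffAt.congr_of_eventuallyEq ?_ (periodize_eventually_eq hL hsub hκ hz)
    have : ContDiff ℝ (⊤ : ℕ∞) fun y => φ (y - z) := hs.comp (contDiff_id.sub contDiff_const)
    exact this.contDiffAt
  · exact contDiffAt_const.congr_of_eventuallyEq (periodize_eventually_zero hL hc hx)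

open scoped Pointwise in
/-- At points of the half-open box the periodization agrees with `φ` in a neighbourhood, also at
points of the boundary, where both vanish locally. -/
lemma periodize_eventuallyEq_self {n : ℕ} {L : ℝ} (hL : 0 < L)
    {φ : EuclideanSpace ℝ (Fin n) → ℝ}
    (hc : HasCompactSupport φ) (hsub : tsupport φ ⊆ openBox n L)
    {x : EuclideanSpace ℝ (Fin n)} (hx : x ∈ periodBox n L) :
    periodize hL φ =ᶠ[nhds x] φ := by
  by_cases hxK : x ∈ tsupport φ
  · simpa using periodize_eventually_eq hL hsub hxK (perLat n L hL).zero_mem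
  · have h0 : φ =ᶠ[nhds x] fun _ => 0 := notMem_tsupport_iff_eventuallyEq.1 hxK
    refine (periodize_eventually_zero hL hc ?_).trans h0.symm
    rintro ⟨κ, hκ, z, hz, rfl⟩
    apply hxK
    have h1 : ZSpan.fract (perBasis n L hL) (κ + z) = ZSpan.fract (perBasis n L hL) κ :=
      ZSpan.fract_add_ZSpan _ _ hz
    rw [(ZSpan.fract_eq_self (b := perBasis n L hL)).2
      (by rw [fundamentalDomain_perBasis]; exact hx),
      (ZSpan.fract_eq_self (b := perBasis n L hL)).2
      (by rw [fundamentalDomain_perBasis]; exact openBox_subset n L (hsub hκ))] at h1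
    change κ + z ∈ tsupport φ
    rw [show κ + z = κ from h1]
    exact hκ

/-! ### Upper bound: two disjoint copies of a test function -/

lemma eDens_congr {n k : ℕ} {s : ℝ} {f g : EuclideanSpace ℝ (Fin n) → ℝ}
    {x : EuclideanSpace ℝ (Fin n)} (h : f =ᶠ[nhds x] g) : eDens n k s f x = eDens n k s g x := by
  unfold eDens
  rw [norm_gradient_eq, norm_gradient_eq, h.fderiv_eq, h.eq_of_nhds]

lemma eDens_const_mul {n k : ℕ} {s : ℝ} {f : EuclideanSpace ℝ (Fin n) → ℝ} (c : ℝ)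
    (hf : ContDiff ℝ (⊤ : ℕ∞) f) (x : EuclideanSpace ℝ (Fin n)) :
    eDens n k s (fun y => c * f y) x = c ^ 2 * eDens n k s f x := by
  unfold eDens
  rw [norm_gradient_eq, norm_gradient_eq]
  have hd : DifferentiableAt ℝ f x := (hf.differentiable (by simp)).differentiableAt
  rw [fderiv_const_mul hd, norm_smul, mul_pow, Real.norm_eq_abs, sq_abs]
  ring

lemma eDens_zero {n k : ℕ} {s : ℝ} (x : EuclideanSpace ℝ (Fin n)) :
    eDens n k s (fun _ => 0) x = 0 := by
  unfold eDens
  rw [norm_gradient_eq]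
  simp

lemma eDens_eq_zero_of_notMem {n k : ℕ} {s : ℝ} {φ : EuclideanSpace ℝ (Fin n) → ℝ}
    {x : EuclideanSpace ℝ (Fin n)} (h : x ∉ tsupport φ) : eDens n k s φ x = 0 := by
  rw [eDens_congr (notMem_tsupport_iff_eventuallyEq.1 h)]
  exact eDens_zero x

/-- Functions with disjoint supports have additive energy density. -/
lemma eDens_disjoint {n k : ℕ} {s : ℝ} {f g : EuclideanSpace ℝ (Fin n) → ℝ}
    (hf : ContDiff ℝ (⊤ : ℕ∞) f) (hg : ContDiff ℝ (⊤ : ℕ∞) g)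
    (hd : Disjoint (tsupport f) (tsupport g)) (a b : ℝ) (x : EuclideanSpace ℝ (Fin n)) :
    eDens n k s (fun y => a * f y + b * g y) x
      = a ^ 2 * eDens n k s f x + b ^ 2 * eDens n k s g x := by
  by_cases hx : x ∈ tsupport f
  · have hx' : x ∉ tsupport g := fun h => Set.disjoint_left.1 hd hx h
    have h0 := notMem_tsupport_iff_eventuallyEq.1 hx'
    rw [eDens_eq_zero_of_notMem hx', ← eDens_const_mul a hf]
    have : (fun y => a * f y + b * g y) =ᶠ[nhds x] fun y => a * f y := by
      filter_upwards [h0] with y hy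
      simp [hy]
    rw [eDens_congr this]
    ring
  · have h0 := notMem_tsupport_iff_eventuallyEq.1 hx
    rw [eDens_eq_zero_of_notMem hx, ← eDens_const_mul b hg]
    have : (fun y => a * f y + b * g y) =ᶠ[nhds x] fun y => b * g y := by
      filter_upwards [h0] with y hy
      simp [hy]
    rw [eDens_congr this]
    ring

lemma setIntegral_periodBox_of_support {n : ℕ} {L : ℝ}
    {φ F : EuclideanSpace ℝ (Fin n) → ℝ} (hsub : tsupport φ ⊆ openBox n L)
    (hF : ∀ x ∉ tsupport φ, F x = 0) :
    ∫ x in periodBox n L, F x = ∫ x, F x :=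
  setIntegral_eq_integral_of_forall_compl_eq_zero fun x hx =>
    hF x fun h => hx (openBox_subset n L (hsub h))

lemma rpow_continuous_of_nonneg {X : Type*} [TopologicalSpace X] {f : X → ℝ} (hf : Continuous f)
    {p : ℝ} (hp : 0 ≤ p) : Continuous fun x => f x ^ p :=
  hf.rpow_const fun _ => Or.inr hp

/-- The competitor built from two disjointly supported functions `φ₁`, `φ₂` with the same energy
`E` and the same `L^p` mass `P`: the weight is the smooth positive function
`√(ψ₁² + ψ₂² + δ²)` and the plane is spanned by the periodizations `ψ₁`, `ψ₂`. -/
lemma two_bumps_mem {n k : ℕ} (hk : 3 ≤ k) {s : ℝ} (hs : 0 < s) {L : ℝ} (hL : 0 < L)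
    {φ₁ φ₂ : EuclideanSpace ℝ (Fin n) → ℝ}
    (h1 : ContDiff ℝ (⊤ : ℕ∞) φ₁) (h2 : ContDiff ℝ (⊤ : ℕ∞) φ₂)
    (c1 : HasCompactSupport φ₁) (c2 : HasCompactSupport φ₂)
    (s1 : tsupport φ₁ ⊆ openBox n L) (s2 : tsupport φ₂ ⊆ openBox n L)
    (hd : Disjoint (tsupport φ₁) (tsupport φ₂)) {E P : ℝ} (hP : 0 < P)
    (E1 : ∫ x, eDens n k s φ₁ x = E) (E2 : ∫ x, eDens n k s φ₂ x = E)
    (P1 : ∫ x, |φ₁ x| ^ pK k = P) (P2 : ∫ x, |φ₂ x| ^ pK k = P) {δ : ℝ} (hδ : 0 < δ) :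
    ∃ r ∈ y2PerSet n k s L, r ≤ E / P *
      (∫ x in periodBox n L, √(φ₁ x ^ 2 + φ₂ x ^ 2 + δ ^ 2) ^ pK k) ^ (2 / (k : ℝ)) := by
  have hp := pK_gt_two hk
  set p := pK k with hp_def
  set ψ₁ := periodize hL φ₁ with hψ₁
  set ψ₂ := periodize hL φ₂ with hψ₂
  have hc1 : ContDiff ℝ (⊤ : ℕ∞) ψ₁ := periodize_contDiff hL h1 c1 s1
  have hc2 : ContDiff ℝ (⊤ : ℕ∞) ψ₂ := periodize_contDiff hL h2 c2 s2
  have hp1 : IsPeriodicFun n L ψ₁ := periodize_periodic hL φ₁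
  have hp2 : IsPeriodicFun n L ψ₂ := periodize_periodic hL φ₂
  have e1 : ∀ x ∈ periodBox n L, ψ₁ =ᶠ[nhds x] φ₁ :=
    fun x hx => periodize_eventuallyEq_self hL c1 s1 hx
  have e2 : ∀ x ∈ periodBox n L, ψ₂ =ᶠ[nhds x] φ₂ :=
    fun x hx => periodize_eventuallyEq_self hL c2 s2 hx
  have hprod : ∀ x, φ₁ x * φ₂ x = 0 := by
    intro x
    by_contra hne
    exact Set.disjoint_left.1 hd (subset_tsupport _ (left_ne_zero_of_mul hne))
      (subset_tsupport _ (right_ne_zero_of_mul hne))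
  let u : EuclideanSpace ℝ (Fin n) → ℝ := fun x => √(ψ₁ x ^ 2 + ψ₂ x ^ 2 + δ ^ 2)
  have hupos : ∀ x, 0 < ψ₁ x ^ 2 + ψ₂ x ^ 2 + δ ^ 2 := fun x => by positivity
  have hu : ContDiff ℝ (⊤ : ℕ∞) u := by
    apply ContDiff.sqrt
    · exact ((hc1.pow 2).add (hc2.pow 2)).add contDiff_const
    · exact fun x => ne_of_gt (hupos x)
  -- energy of an element of the plane
  have henergy : ∀ a b : ℝ, ∫ x in periodBox n L, eDens n k s (a • ψ₁ + b • ψ₂) x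
      = (a ^ 2 + b ^ 2) * E := by
    intro a b
    have hi1 := (integrableOn_periodBox hL (eDens_continuous (k := k) (s := s) h1)).const_mul (a ^ 2)
    have hi2 := (integrableOn_periodBox hL (eDens_continuous (k := k) (s := s) h2)).const_mul (b ^ 2)
    calc ∫ x in periodBox n L, eDens n k s (a • ψ₁ + b • ψ₂) x
        = ∫ x in periodBox n L, (a ^ 2 * eDens n k s φ₁ x + b ^ 2 * eDens n k s φ₂ x) := by
          refine setIntegral_congr_fun (measurableSet_periodBox n hL) fun x hx => ?_
          have : (a • ψ₁ + b • ψ₂) =ᶠ[nhds x] fun y => a * φ₁ y + b * φ₂ y := by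
            filter_upwards [e1 x hx, e2 x hx] with y hy1 hy2
            simp [hy1, hy2]
          rw [eDens_congr this, eDens_disjoint h1 h2 hd]
      _ = a ^ 2 * E + b ^ 2 * E := by
          rw [integral_add hi1 hi2, integral_const_mul, integral_const_mul,
            setIntegral_periodBox_of_support s1 fun x hx => eDens_eq_zero_of_notMem hx,
            setIntegral_periodBox_of_support s2 fun x hx => eDens_eq_zero_of_notMem hx, E1, E2]
      _ = _ := by ring
  -- lower bound for the weighted `L²` norm, using `u ≥ |φᵢ|`
  have hzero : ∀ φ : EuclideanSpace ℝ (Fin n) → ℝ, ∀ x ∉ tsupport φ, |φ x| ^ p = 0 := by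
    intro φ x hx
    rw [image_eq_zero_of_notMem_tsupport hx, abs_zero, Real.zero_rpow (by linarith)]
  have hweight : ∀ a b : ℝ, (a ^ 2 + b ^ 2) * P ≤
      ∫ x in periodBox n L, u x ^ (p - 2) * ((a • ψ₁ + b • ψ₂) x) ^ 2 := by
    intro a b
    have hq1 : Continuous fun x => |φ₁ x| ^ p :=
      rpow_continuous_of_nonneg h1.continuous.abs (by linarith)
    have hq2 : Continuous fun x => |φ₂ x| ^ p :=
      rpow_continuous_of_nonneg h2.continuous.abs (by linarith)
    have hi1 := (integrableOn_periodBox hL hq1).const_mul (a ^ 2)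
    have hi2 := (integrableOn_periodBox hL hq2).const_mul (b ^ 2)
    have hq3 : Continuous fun x => u x ^ (p - 2) * ((a • ψ₁ + b • ψ₂) x) ^ 2 := by
      refine (rpow_continuous_of_nonneg hu.continuous (by linarith)).mul ?_
      have := hc1.continuous
      have := hc2.continuous
      simp only [Pi.add_apply, Pi.smul_apply, smul_eq_mul]
      fun_prop
    calc (a ^ 2 + b ^ 2) * P = a ^ 2 * P + b ^ 2 * P := by ring
      _ = ∫ x in periodBox n L, (a ^ 2 * |φ₁ x| ^ p + b ^ 2 * |φ₂ x| ^ p) := by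
          rw [integral_add hi1 hi2, integral_const_mul, integral_const_mul,
            setIntegral_periodBox_of_support s1 (hzero φ₁),
            setIntegral_periodBox_of_support s2 (hzero φ₂), P1, P2]
      _ ≤ _ := by
          refine setIntegral_mono_on (hi1.add hi2) (integrableOn_periodBox hL hq3)
            (measurableSet_periodBox n hL) fun x hx => ?_
          have key : ∀ t : ℝ, |t| ≤ u x → |t| ^ p ≤ u x ^ (p - 2) * t ^ 2 := by
            intro t ht
            rcases eq_or_ne t 0 with rfl | h0
            · rw [abs_zero, Real.zero_rpow (by linarith)]; simp
            · have : |t| ^ p = |t| ^ (p - 2) * t ^ 2 := by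
                rw [← sq_abs t, ← Real.rpow_natCast, ← Real.rpow_add (abs_pos.2 h0)]
                norm_num
              rw [this]
              gcongr
          have hle1 : |φ₁ x| ≤ u x := by
            rw [← (e1 x hx).eq_of_nhds]
            exact Real.abs_le_sqrt (by nlinarith [sq_nonneg (ψ₂ x), sq_nonneg δ])
          have hle2 : |φ₂ x| ≤ u x := by
            rw [← (e2 x hx).eq_of_nhds]
            exact Real.abs_le_sqrt (by nlinarith [sq_nonneg (ψ₁ x), sq_nonneg δ])
          simp only [Pi.add_apply, Pi.smul_apply, smul_eq_mul]
          rw [(e1 x hx).eq_of_nhds, (e2 x hx).eq_of_nhds]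
          have hexp : (a * φ₁ x + b * φ₂ x) ^ 2 = a ^ 2 * φ₁ x ^ 2 + b ^ 2 * φ₂ x ^ 2 := by
            linear_combination 2 * a * b * hprod x
          rw [hexp]
          have k1 := mul_le_mul_of_nonneg_left (key _ hle1) (sq_nonneg a)
          have k2 := mul_le_mul_of_nonneg_left (key _ hle2) (sq_nonneg b)
          linarith
  have hE : 0 ≤ E := by
    rw [← E1]
    exact integral_nonneg fun x => eDens_nonneg hk hs _ _
  -- the two periodizations span a plane
  have hli : LinearIndependent ℝ ![ψ₁, ψ₂] := by
    rw [LinearIndependent.pair_iff]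
    intro a b hab
    have h := hweight a b
    rw [hab] at h
    simp only [Pi.zero_apply, ne_eq, OfNat.ofNat_ne_zero, not_false_eq_true, zero_pow, mul_zero,
      integral_zero] at h
    have h' : a ^ 2 + b ^ 2 ≤ 0 := by
      by_contra hc
      exact absurd h (not_le.2 (mul_pos (not_le.1 hc) hP))
    constructor <;> nlinarith [sq_nonneg a, sq_nonneg b]
  have hspan : ∀ v ∈ Submodule.span ℝ (Set.range ![ψ₁, ψ₂]), ∃ a b : ℝ, a • ψ₁ + b • ψ₂ = v := by
    intro v hv
    rw [Matrix.range_cons, Matrix.range_cons, Matrix.range_empty, Set.union_empty,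
      Set.singleton_union] at hv
    exact Submodule.mem_span_pair.1 hv
  refine ⟨_, ⟨u, Submodule.span ℝ (Set.range ![ψ₁, ψ₂]), hu, ?_, fun x => Real.sqrt_pos.2 (hupos x),
    ?_, ?_, rfl⟩, ?_⟩
  · intro x i
    simp only [u, hp1 x i, hp2 x i]
  · rw [finrank_span_eq_card hli]; simp
  · intro v hv
    obtain ⟨a, b, rfl⟩ := hspan v hv
    refine ⟨?_, ?_⟩
    · exact (hc1.const_smul a).add (hc2.const_smul b)
    · intro x i
      simp only [Pi.add_apply, Pi.smul_apply, hp1 x i, hp2 x i]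
  · have hU : ∫ x in periodBox n L, u x ^ p
        = ∫ x in periodBox n L, √(φ₁ x ^ 2 + φ₂ x ^ 2 + δ ^ 2) ^ p := by
      refine setIntegral_congr_fun (measurableSet_periodBox n hL) fun x hx => ?_
      simp only [u, (e1 x hx).eq_of_nhds, (e2 x hx).eq_of_nhds]
    have hU0 : 0 ≤ ∫ x in periodBox n L, √(φ₁ x ^ 2 + φ₂ x ^ 2 + δ ^ 2) ^ p :=
      integral_nonneg fun x => by positivity
    refine Real.sSup_le ?_ (by positivity)
    rintro t ⟨v, hv, hv0, rfl⟩
    obtain ⟨a, b, rfl⟩ := hspan v hv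
    rw [hU]
    refine mul_le_mul_of_nonneg_right ?_ (Real.rpow_nonneg hU0 _)
    have hab : 0 < a ^ 2 + b ^ 2 := by
      by_contra hc
      have ha : a = 0 := by nlinarith [sq_nonneg a, sq_nonneg b]
      have hb : b = 0 := by nlinarith [sq_nonneg a, sq_nonneg b]
      apply hv0
      simp [ha, hb]
    have h3 := henergy a b
    unfold eDens at h3
    rw [h3]
    calc (a ^ 2 + b ^ 2) * E / _ ≤ (a ^ 2 + b ^ 2) * E / ((a ^ 2 + b ^ 2) * P) := by
          gcongr
          exact hweight a b
      _ = E / P := by field_simp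

/-- Two disjoint bumps of the same energy and mass give a value below any `c` larger than `2^{2/k}`
times their Yamabe quotient, on letting `δ → 0` in `two_bumps_mem`. -/
lemma exists_mem_y2PerSet_lt {n k : ℕ} (hk : 3 ≤ k) {s : ℝ} (hs : 0 < s) {L : ℝ} (hL : 0 < L)
    {φ₁ φ₂ : EuclideanSpace ℝ (Fin n) → ℝ}
    (h1 : ContDiff ℝ (⊤ : ℕ∞) φ₁) (h2 : ContDiff ℝ (⊤ : ℕ∞) φ₂)
    (c1 : HasCompactSupport φ₁) (c2 : HasCompactSupport φ₂)
    (s1 : tsupport φ₁ ⊆ openBox n L) (s2 : tsupport φ₂ ⊆ openBox n L)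
    (hd : Disjoint (tsupport φ₁) (tsupport φ₂)) {E P : ℝ} (hP : 0 < P)
    (E1 : ∫ x, eDens n k s φ₁ x = E) (E2 : ∫ x, eDens n k s φ₂ x = E)
    (P1 : ∫ x, |φ₁ x| ^ pK k = P) (P2 : ∫ x, |φ₂ x| ^ pK k = P)
    {c : ℝ} (hc : (2 : ℝ) ^ (2 / (k : ℝ)) * (E / P ^ (2 / pK k)) < c) :
    ∃ r ∈ y2PerSet n k s L, r < c := by
  have hp := pK_gt_two hk
  have hp0 : pK k ≠ 0 := by linarith
  have hk0 : (0 : ℝ) < k := by exact_mod_cast (by omega : 0 < k)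
  -- as `δ → 0` the weight has mass tending to `2 * P`
  have hlim : Filter.Tendsto
      (fun δ : ℝ => ∫ x in periodBox n L, √(φ₁ x ^ 2 + φ₂ x ^ 2 + δ ^ 2) ^ pK k)
      (nhdsWithin 0 (Set.Ioi 0)) (nhds (2 * P)) := by
    have hval : ∫ x in periodBox n L, √(φ₁ x ^ 2 + φ₂ x ^ 2 + (0 : ℝ) ^ 2) ^ pK k = 2 * P := by
      have hq1 : Continuous fun x => |φ₁ x| ^ pK k :=
        rpow_continuous_of_nonneg h1.continuous.abs (by linarith)
      have hq2 : Continuous fun x => |φ₂ x| ^ pK k :=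
        rpow_continuous_of_nonneg h2.continuous.abs (by linarith)
      have hpt : ∀ x, √(φ₁ x ^ 2 + φ₂ x ^ 2 + (0 : ℝ) ^ 2) ^ pK k
          = |φ₁ x| ^ pK k + |φ₂ x| ^ pK k := by
        intro x
        by_cases hx : x ∈ tsupport φ₁
        · have hx' : φ₂ x = 0 :=
            image_eq_zero_of_notMem_tsupport fun h => Set.disjoint_left.1 hd hx h
          simp [hx', Real.sqrt_sq_eq_abs, Real.zero_rpow hp0]
        · have hx' : φ₁ x = 0 := image_eq_zero_of_notMem_tsupport hx
          simp [hx', Real.sqrt_sq_eq_abs, Real.zero_rpow hp0]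
      simp only [hpt]
      have hzero : ∀ φ : EuclideanSpace ℝ (Fin n) → ℝ, ∀ x ∉ tsupport φ, |φ x| ^ pK k = 0 := by
        intro φ x hx
        rw [image_eq_zero_of_notMem_tsupport hx, abs_zero, Real.zero_rpow hp0]
      rw [integral_add (integrableOn_periodBox hL hq1) (integrableOn_periodBox hL hq2),
        setIntegral_periodBox_of_support s1 (hzero φ₁),
        setIntegral_periodBox_of_support s2 (hzero φ₂), P1, P2]
      ring
    rw [← hval]
    have hcφ1 := h1.continuous
    have hcφ2 := h2.continuous
    have hcont : ∀ δ : ℝ, Continuous fun x => √(φ₁ x ^ 2 + φ₂ x ^ 2 + δ ^ 2) ^ pK k := fun δ =>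
      rpow_continuous_of_nonneg (by fun_prop) (by linarith)
    refine Filter.Tendsto.mono_left ?_ nhdsWithin_le_nhds
    refine tendsto_integral_filter_of_dominated_convergence
      (fun x => √(φ₁ x ^ 2 + φ₂ x ^ 2 + (1 : ℝ) ^ 2) ^ pK k) ?_ ?_
      (integrableOn_periodBox hL (hcont 1)) ?_
    · exact Filter.Eventually.of_forall fun δ => (hcont δ).aestronglyMeasurable
    · filter_upwards [Metric.ball_mem_nhds (0 : ℝ) one_pos] with δ hδ
      refine Filter.Eventually.of_forall fun x => ?_
      have hδ' : |δ| ≤ 1 := by simpa using (mem_ball_zero_iff.1 hδ).le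
      rw [Real.norm_of_nonneg (by positivity)]
      have : δ ^ 2 ≤ 1 ^ 2 := sq_le_sq' (by linarith [neg_abs_le δ]) (by linarith [le_abs_self δ])
      gcongr
    · refine Filter.Eventually.of_forall fun x => ?_
      have : Continuous fun δ : ℝ => √(φ₁ x ^ 2 + φ₂ x ^ 2 + δ ^ 2) ^ pK k :=
        rpow_continuous_of_nonneg (by fun_prop) (by linarith)
      exact this.tendsto 0
  have hlim2 : Filter.Tendsto
      (fun δ : ℝ => E / P *
        (∫ x in periodBox n L, √(φ₁ x ^ 2 + φ₂ x ^ 2 + δ ^ 2) ^ pK k) ^ (2 / (k : ℝ)))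
      (nhdsWithin 0 (Set.Ioi 0)) (nhds (E / P * (2 * P) ^ (2 / (k : ℝ)))) :=
    (hlim.rpow_const (Or.inr (by positivity))).const_mul _
  have heq : E / P * (2 * P) ^ (2 / (k : ℝ)) = (2 : ℝ) ^ (2 / (k : ℝ)) * (E / P ^ (2 / pK k)) := by
    rw [two_div_pK hk, Real.mul_rpow (by norm_num) hP.le, Real.rpow_sub hP, Real.rpow_one]
    field_simp
  rw [heq] at hlim2
  obtain ⟨δ, hδ1, hδ2⟩ :=
    ((hlim2.eventually_lt_const hc).and self_mem_nhdsWithin).exists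
  obtain ⟨r, hr, hle⟩ := two_bumps_mem hk hs hL h1 h2 c1 c2 s1 s2 hd hP E1 E2 P1 P2 hδ2
  exact ⟨r, hr, hle.trans_lt hδ1⟩

lemma integral_abs_rpow_pos {n : ℕ} {φ : EuclideanSpace ℝ (Fin n) → ℝ}
    (h1 : Continuous φ) (c1 : HasCompactSupport φ) (h0 : φ ≠ 0) {p : ℝ} (hp : 0 < p) :
    0 < ∫ x, |φ x| ^ p := by
  obtain ⟨x, hx⟩ := Function.ne_iff.1 h0
  refine Continuous.integral_pos_of_hasCompactSupport_nonneg_nonzero (x := x)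
    (rpow_continuous_of_nonneg h1.abs hp.le) ?_ (fun y => by positivity) ?_
  · exact c1.comp_left (g := fun t : ℝ => |t| ^ p) (by simp [Real.zero_rpow hp.ne'])
  · have := abs_pos.2 hx
    exact ne_of_gt (Real.rpow_pos_of_pos this p)

/-- Two far apart translates of a test function fit into every sufficiently large box. -/
lemma eventually_exists_mem_lt {n k : ℕ} (hn : 1 ≤ n) (hk : 3 ≤ k) {s : ℝ} (hs : 0 < s)
    {φ : EuclideanSpace ℝ (Fin n) → ℝ} (h1 : ContDiff ℝ (⊤ : ℕ∞) φ)
    (c1 : HasCompactSupport φ) (h0 : φ ≠ 0) :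
    ∀ᶠ L in Filter.atTop, ∀ c, (2 : ℝ) ^ (2 / (k : ℝ)) *
        (yNum n k s φ / (∫ x, |φ x| ^ pK k) ^ (2 / pK k)) < c →
      ∃ r ∈ y2PerSet n k s L, r < c := by
  have hp := pK_gt_two hk
  obtain ⟨R, hR0, hR⟩ : ∃ R > 0, tsupport φ ⊆ Metric.ball 0 R :=
    c1.isBounded.subset_ball_lt 0 0
  filter_upwards [Filter.eventually_gt_atTop (8 * R)] with L hL c hc
  have hL0 : 0 < L := by linarith
  let t : ℝ → EuclideanSpace ℝ (Fin n) := fun r => WithLp.toLp 2 (fun _ => r)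
  let T : ℝ → EuclideanSpace ℝ (Fin n) → ℝ := fun r x => φ (x - t r)
  have hT1 : ∀ r, ContDiff ℝ (⊤ : ℕ∞) (T r) := fun r => h1.comp (contDiff_id.sub contDiff_const)
  have hTs : ∀ r, ∀ x ∈ tsupport (T r), ∀ i, |x i - r| < R := by
    intro r x hx i
    have hcl : tsupport (T r) = (Homeomorph.subRight (t r)) ⁻¹' tsupport φ :=
      tsupport_comp_eq_preimage φ (Homeomorph.subRight (t r))
    rw [hcl] at hx
    have h2 := hR hx
    rw [mem_ball_zero_iff] at h2
    have h3 := PiLp.norm_apply_le (Homeomorph.subRight (t r) x) i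
    exact lt_of_le_of_lt h3 h2
  have hTc : ∀ r, HasCompactSupport (T r) := fun r =>
    c1.comp_homeomorph (Homeomorph.subRight (t r))
  have hE : ∀ r, ∫ x, eDens n k s (T r) x = yNum n k s φ := by
    intro r
    have : ∀ x, eDens n k s (T r) x = eDens n k s φ (x - t r) := by
      intro x
      unfold eDens
      rw [norm_gradient_eq, norm_gradient_eq, fderiv_comp_sub]
    simp only [this]
    exact integral_sub_right_eq_self (fun x => eDens n k s φ x) (t r)
  have hPP : ∀ r, ∫ x, |T r x| ^ pK k = ∫ x, |φ x| ^ pK k := fun r =>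
    integral_sub_right_eq_self (fun x => |φ x| ^ pK k) (t r)
  refine exists_mem_y2PerSet_lt hk hs hL0 (hT1 (2 * R)) (hT1 (6 * R)) (hTc _) (hTc _) ?_ ?_ ?_
    (integral_abs_rpow_pos h1.continuous c1 h0 (by linarith)) (hE _) (hE _) (hPP _) (hPP _) hc
  · intro x hx i
    have := abs_lt.1 (hTs _ x hx i)
    constructor <;> linarith
  · intro x hx i
    have := abs_lt.1 (hTs _ x hx i)
    constructor <;> linarith
  · rw [Set.disjoint_left]
    intro x hx hx'
    have h2 := abs_lt.1 (hTs _ x hx ⟨0, hn⟩)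
    have h3 := abs_lt.1 (hTs _ x hx' ⟨0, hn⟩)
    linarith

lemma exists_test_function (n : ℕ) :
    ∃ φ : EuclideanSpace ℝ (Fin n) → ℝ,
      ContDiff ℝ (⊤ : ℕ∞) φ ∧ HasCompactSupport φ ∧ φ ≠ 0 := by
  let f : ContDiffBump (0 : EuclideanSpace ℝ (Fin n)) := ⟨1, 2, one_pos, one_lt_two⟩
  refine ⟨f, f.contDiff, f.hasCompactSupport, fun h => ?_⟩
  have h1 : f 0 = 1 := f.one_of_mem_closedBall (by simp [f])
  rw [h] at h1
  simp at h1

/-! ### Comparison of periodic functions with test functions -/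

lemma volume_openBox_one (n : ℕ) : volume (openBox n 1) = 1 := by
  have h : openBox n 1 = (MeasurableEquiv.toLp 2 (Fin n → ℝ)).symm ⁻¹'
      (Set.univ.pi fun _ => Set.Ioo (0 : ℝ) 1) := by
    ext x; simp [openBox]
  rw [h, (EuclideanSpace.volume_preserving_symm_measurableEquiv_toLp (Fin n)).measure_preimage_equiv,
    Real.volume_pi_Ioo]
  simp

lemma volume_real_periodBox (n : ℕ) {L : ℝ} (hL : 0 < L) :
    volume.real (periodBox n L) = L ^ n := by
  have h : periodBox n L = (MeasurableEquiv.toLp 2 (Fin n → ℝ)).symm ⁻¹'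
      (Set.univ.pi fun _ => Set.Ico (0 : ℝ) L) := by
    ext x; simp [periodBox]
  rw [measureReal_def, h,
    (EuclideanSpace.volume_preserving_symm_measurableEquiv_toLp (Fin n)).measure_preimage_equiv,
    Real.volume_pi_Ico]
  simp [hL.le]

/-- A cutoff on the unit box exhausting its volume up to `τ`, by inner regularity. -/
lemma exists_cutoff_unit (n : ℕ) {p : ℝ} (hp : 0 < p) {τ : ℝ} (hτ : 0 < τ) :
    ∃ η : EuclideanSpace ℝ (Fin n) → ℝ, ContDiff ℝ (⊤ : ℕ∞) η ∧ HasCompactSupport η ∧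
      tsupport η ⊆ openBox n 1 ∧ (∀ x, 0 ≤ η x ∧ η x ≤ 1) ∧ 1 - τ ≤ ∫ x, |η x| ^ p := by
  have hlt : ENNReal.ofReal (1 - τ) < volume (openBox n 1) := by
    rw [volume_openBox_one, ENNReal.ofReal_lt_one]
    linarith
  obtain ⟨K, hKs, hK, hKv⟩ := (isOpen_openBox n 1).exists_lt_isCompact hlt
  obtain ⟨f, hf0, hf1, hf⟩ := exists_contMDiffMap_zero_one_nhds_of_isClosed
    (n := (⊤ : ℕ∞)) (modelWithCornersSelf ℝ (EuclideanSpace ℝ (Fin n)))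
    (isOpen_openBox n 1).isClosed_compl hK.isClosed
    (Set.disjoint_left.2 fun x hx hx' => hx (hKs hx'))
  have hts : tsupport f ⊆ openBox n 1 := by
    intro x hx
    by_contra hxo
    have := Filter.Eventually.filter_mono (nhds_le_nhdsSet (s := (openBox n 1)ᶜ) hxo) hf0
    exact (notMem_tsupport_iff_eventuallyEq.2 this) hx
  have hcs : HasCompactSupport f := by
    have hb : Bornology.IsBounded (tsupport f) :=
      (isBounded_periodBox n one_pos).subset (hts.trans (openBox_subset n 1))
    exact Metric.isCompact_of_isClosed_isBounded (isClosed_tsupport _) hb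
  have hsm : ContDiff ℝ (⊤ : ℕ∞) f := contMDiff_iff_contDiff.1 f.contMDiff
  refine ⟨f, hsm, hcs, hts, hf, ?_⟩
  have hfint : Integrable fun x => |f x| ^ p := by
    refine Continuous.integrable_of_hasCompactSupport
      (rpow_continuous_of_nonneg hsm.continuous.abs hp.le) ?_
    exact hcs.comp_left (g := fun t : ℝ => |t| ^ p) (by simp [Real.zero_rpow hp.ne'])
  calc 1 - τ ≤ volume.real K := by
        rw [measureReal_def]
        exact (ENNReal.ofReal_le_iff_le_toReal hK.measure_lt_top.ne).1 hKv.le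
    _ = ∫ x in K, |f x| ^ p := by
        rw [setIntegral_congr_fun (g := fun _ => (1 : ℝ)) hK.measurableSet]
        · simp
        · intro x hx
          have : f x = 1 := (hf1.self_of_nhdsSet) x hx
          simp [this]
    _ ≤ _ := setIntegral_le_integral hfint (Filter.Eventually.of_forall fun x => by positivity)

/-- Rescaling a fixed cutoff of the unit box makes its gradient small in a large box. -/
lemma exists_cutoff (n : ℕ) {p : ℝ} (hp : 0 < p) {τ : ℝ} (hτ : 0 < τ) {G : ℝ} (hG : 0 < G) :
    ∀ᶠ L : ℝ in Filter.atTop, ∃ η : EuclideanSpace ℝ (Fin n) → ℝ,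
      ContDiff ℝ (⊤ : ℕ∞) η ∧ HasCompactSupport η ∧
      tsupport η ⊆ openBox n L ∧ (∀ x, 0 ≤ η x ∧ η x ≤ 1) ∧ (∀ x, ‖fderiv ℝ η x‖ ≤ G) ∧
      (1 - τ) * L ^ n ≤ ∫ x, |η x| ^ p := by
  obtain ⟨η, h1, h2, h3, h4, h5⟩ := exists_cutoff_unit n hp hτ
  obtain ⟨C, hC⟩ := (h1.continuous_fderiv (by simp)).bounded_above_of_compact_support
    (h2.fderiv (𝕜 := ℝ))
  filter_upwards [Filter.eventually_gt_atTop 0, Filter.eventually_ge_atTop (C / G)] with L hL hLC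
  have hd : ∀ x, DifferentiableAt ℝ η x := fun x => (h1.differentiable (by simp)).differentiableAt
  have hinv : L⁻¹ ≠ 0 := inv_ne_zero hL.ne'
  refine ⟨fun x => η (L⁻¹ • x), h1.comp (contDiff_const_smul _),
    h2.comp_smul hinv, ?_, fun x => h4 _, ?_, ?_⟩
  · intro x hx i
    have hcl : tsupport (fun x => η (L⁻¹ • x)) = (Homeomorph.smulOfNeZero L⁻¹ hinv) ⁻¹' tsupport η :=
      tsupport_comp_eq_preimage η (Homeomorph.smulOfNeZero L⁻¹ hinv)
    rw [hcl] at hx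
    have := h3 hx i
    simp only [Homeomorph.smulOfNeZero_apply, PiLp.smul_apply, smul_eq_mul, Set.mem_Ioo] at this
    obtain ⟨ha, hb⟩ := this
    rw [inv_mul_lt_iff₀ hL, mul_one] at hb
    exact ⟨pos_of_mul_pos_right ha (inv_nonneg.2 hL.le), hb⟩
  · intro x
    have hfd : fderiv ℝ (fun x => η (L⁻¹ • x)) x = L⁻¹ • fderiv ℝ η (L⁻¹ • x) :=
      fderiv_comp_smul ..
    rw [hfd, norm_smul, Real.norm_of_nonneg (inv_nonneg.2 hL.le), inv_mul_le_iff₀ hL]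
    calc _ ≤ C := hC _
      _ ≤ L * G := by rwa [div_le_iff₀ hG] at hLC
  · have := Measure.integral_comp_inv_smul_of_nonneg volume (fun x => |η x| ^ p) hL.le
    rw [this, finrank_euclideanSpace_fin, smul_eq_mul, mul_comm]
    gcongr

lemma yamabeSet_nonneg {n k : ℕ} (hk : 3 ≤ k) {s : ℝ} (hs : 0 < s) :
    ∀ r ∈ yamabeSet n k s, 0 ≤ r := by
  rintro r ⟨u, -, -, -, rfl⟩
  refine div_nonneg (integral_nonneg fun x => eDens_nonneg hk hs u x) ?_
  exact Real.rpow_nonneg (integral_nonneg fun x => by positivity) _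

lemma yamabeConst_le {n k : ℕ} (hk : 3 ≤ k) {s : ℝ} (hs : 0 < s)
    {φ : EuclideanSpace ℝ (Fin n) → ℝ} (h1 : ContDiff ℝ (⊤ : ℕ∞) φ) (h2 : HasCompactSupport φ) :
    yamabeConst n k s * (∫ x, |φ x| ^ pK k) ^ (2 / pK k) ≤ ∫ x, eDens n k s φ x := by
  have hp := pK_gt_two hk
  rcases eq_or_ne φ 0 with rfl | h0
  · have : (2 / pK k) ≠ 0 := by positivity
    simp only [Pi.zero_apply, abs_zero, Real.zero_rpow (show pK k ≠ 0 by linarith), integral_zero,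
      Real.zero_rpow this, mul_zero]
    exact integral_nonneg fun x => eDens_nonneg hk hs _ _
  · have hP := integral_abs_rpow_pos h1.continuous h2 h0 (show 0 < pK k by linarith)
    rw [← le_div_iff₀ (by positivity)]
    exact csInf_le ⟨0, yamabeSet_nonneg hk hs⟩ ⟨φ, h1, h2, h0, rfl⟩

lemma eDens_comp_add {n k : ℕ} {s : ℝ} (w : EuclideanSpace ℝ (Fin n) → ℝ)
    (x y : EuclideanSpace ℝ (Fin n)) :
    eDens n k s (fun z => w (z + y)) x = eDens n k s w (x + y) := by
  unfold eDens
  rw [norm_gradient_eq, norm_gradient_eq, fderiv_comp_add_right]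

lemma eDens_periodic {n k : ℕ} {s L : ℝ} {w : EuclideanSpace ℝ (Fin n) → ℝ}
    (hw : IsPeriodicFun n L w) : IsPeriodicFun n L (eDens n k s w) := by
  intro x i
  rw [← eDens_comp_add]
  congr 1
  exact funext fun z => hw z i

/-- Multiplication by a cutoff with small gradient raises the energy density by at most a factor
`1 + τ`; the term `s v²` absorbs the derivative of the cutoff. -/
lemma eDens_cutoff_le {n k : ℕ} (hk : 3 ≤ k) {s : ℝ} {τ G : ℝ} (hτ : 0 < τ)
    (hG : aK k * (1 + 1 / τ) * G ^ 2 ≤ τ * s) (hs : 0 < s)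
    {η w : EuclideanSpace ℝ (Fin n) → ℝ} (hη : ContDiff ℝ (⊤ : ℕ∞) η)
    (hw : ContDiff ℝ (⊤ : ℕ∞) w) {x : EuclideanSpace ℝ (Fin n)} (h01 : 0 ≤ η x ∧ η x ≤ 1)
    (hd : ‖fderiv ℝ η x‖ ≤ G) :
    eDens n k s (fun y => η y * w y) x ≤ (1 + τ) * eDens n k s w x := by
  have ha := aK_pos hk
  have d1 : DifferentiableAt ℝ η x := (hη.differentiable (by simp)).differentiableAt
  have d2 : DifferentiableAt ℝ w x := (hw.differentiable (by simp)).differentiableAt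
  unfold eDens
  rw [norm_gradient_eq, norm_gradient_eq, fderiv_fun_mul d1 d2]
  have hn1 : ‖η x • fderiv ℝ w x + w x • fderiv ℝ η x‖ ≤ ‖fderiv ℝ w x‖ + |w x| * G := by
    refine (norm_add_le _ _).trans ?_
    rw [norm_smul, norm_smul, Real.norm_of_nonneg h01.1, Real.norm_eq_abs]
    gcongr
    exact mul_le_of_le_one_left (norm_nonneg _) h01.2
  set D := ‖fderiv ℝ w x‖
  have hG0 : 0 ≤ G := (norm_nonneg _).trans hd
  have hsq : ‖η x • fderiv ℝ w x + w x • fderiv ℝ η x‖ ^ 2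
      ≤ (1 + τ) * D ^ 2 + (1 + 1 / τ) * (w x ^ 2 * G ^ 2) := by
    calc _ ≤ (D + |w x| * G) ^ 2 := by gcongr
      _ ≤ (1 + τ) * D ^ 2 + (1 + 1 / τ) * (|w x| * G) ^ 2 := by
          have : (1 + τ) * D ^ 2 + (1 + 1 / τ) * (|w x| * G) ^ 2 - (D + |w x| * G) ^ 2
              = (τ * D - |w x| * G) ^ 2 / τ := by
            field_simp
            ring
          have h2 : 0 ≤ (τ * D - |w x| * G) ^ 2 / τ := by positivity
          linarith
      _ = _ := by rw [mul_pow, sq_abs]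
  have hη2 : η x ^ 2 ≤ 1 := pow_le_one₀ h01.1 h01.2
  have h3 := mul_le_mul_of_nonneg_left hsq ha.le
  have h4 := mul_le_mul_of_nonneg_right hG (sq_nonneg (w x))
  have h5 : s * (η x * w x) ^ 2 ≤ s * w x ^ 2 := by
    rw [mul_pow]
    gcongr
    exact mul_le_of_le_one_left (sq_nonneg _) hη2
  nlinarith

/-- The Euclidean inequality applied to the product of the cutoff `η` with a translate of `w`. The
average over all translates of the `L^p` mass of the product is at least `1 - τ` times that of `w`,
so some translate loses only a fraction `τ` of its mass. -/
lemma periodic_sobolev {n k : ℕ} (hk : 3 ≤ k) {s : ℝ} (hs : 0 < s) {L : ℝ} (hL : 0 < L)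
    {τ G : ℝ} (hτ : 0 < τ) (hG : aK k * (1 + 1 / τ) * G ^ 2 ≤ τ * s) (hτ1 : τ < 1)
    (hY : 0 ≤ yamabeConst n k s)
    {η w : EuclideanSpace ℝ (Fin n) → ℝ} (hη : ContDiff ℝ (⊤ : ℕ∞) η)
    (hηc : HasCompactSupport η) (hηs : tsupport η ⊆ openBox n L)
    (h01 : ∀ x, 0 ≤ η x ∧ η x ≤ 1) (hd : ∀ x, ‖fderiv ℝ η x‖ ≤ G)
    (hJ : (1 - τ) * L ^ n ≤ ∫ x, |η x| ^ pK k)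
    (hw : ContDiff ℝ (⊤ : ℕ∞) w) (hwp : IsPeriodicFun n L w) :
    yamabeConst n k s * ((1 - τ) * ∫ x in periodBox n L, |w x| ^ pK k) ^ (2 / pK k)
      ≤ (1 + τ) * ∫ x in periodBox n L, eDens n k s w x := by
  have hp := pK_gt_two hk
  set p := pK k with hp_def
  set W := ∫ x in periodBox n L, |w x| ^ p with hW
  have hW0 : 0 ≤ W := integral_nonneg fun x => by positivity
  have hcη := hη.continuous
  have hcw := hw.continuous
  let F : EuclideanSpace ℝ (Fin n) → EuclideanSpace ℝ (Fin n) → ℝ :=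
    fun y z => |η z| ^ p * |w (z + y)| ^ p
  have hF : Continuous (Function.uncurry F) := by
    refine Continuous.mul ?_ ?_
    · exact rpow_continuous_of_nonneg (by fun_prop) (by linarith)
    · exact rpow_continuous_of_nonneg (by fun_prop) (by linarith)
  have hFi : Integrable (Function.uncurry F)
      ((volume.restrict (periodBox n L)).prod (volume.restrict (periodBox n L))) := by
    rw [Measure.prod_restrict]
    have h := (isBounded_periodBox n hL).isCompact_closure
    exact (hF.continuousOn.integrableOn_compact (h.prod h)).mono_set
      (Set.prod_mono subset_closure subset_closure)
  have hzero : ∀ x ∉ tsupport η, |η x| ^ p = 0 := by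
    intro x hx
    rw [image_eq_zero_of_notMem_tsupport hx, abs_zero, Real.zero_rpow (by linarith)]
  have hswap : ∫ y in periodBox n L, ∫ z in periodBox n L, F y z = (∫ x, |η x| ^ p) * W := by
    rw [integral_integral_swap hFi, ← setIntegral_periodBox_of_support hηs hzero,
      ← integral_mul_const]
    refine integral_congr_ae (Filter.Eventually.of_forall fun z => ?_)
    have hper : IsPeriodicFun n L fun x => |w x| ^ p := fun x i => by simp only [hwp x i]
    have := setIntegral_periodBox_translate hL hper z
    simp only [F, integral_const_mul]
    rw [hW, ← this]
    simp only [add_comm]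
  -- a translate for which the cutoff keeps the mass
  obtain ⟨y, hy⟩ : ∃ y, (1 - τ) * W ≤ ∫ z in periodBox n L, F y z := by
    have hvol := volume_real_periodBox n hL
    have hLn : 0 < L ^ n := pow_pos hL n
    obtain ⟨y, -, hy⟩ := exists_setAverage_le (μ := volume) (s := periodBox n L)
      (f := fun y => ∫ z in periodBox n L, F y z)
      (by
        intro h
        rw [measureReal_def, h] at hvol
        simp at hvol
        linarith) (volume_periodBox_lt_top n hL).ne hFi.integral_prod_left
    refine ⟨y, le_trans ?_ hy⟩
    rw [setAverage_eq, hswap, hvol, smul_eq_mul, le_inv_mul_iff₀ hLn]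
    calc L ^ n * ((1 - τ) * W) = (1 - τ) * L ^ n * W := by ring
      _ ≤ _ := by gcongr
  let wy : EuclideanSpace ℝ (Fin n) → ℝ := fun z => w (z + y)
  have hwy : ContDiff ℝ (⊤ : ℕ∞) wy := hw.comp (contDiff_id.add contDiff_const)
  let φ : EuclideanSpace ℝ (Fin n) → ℝ := fun z => η z * wy z
  have hφ : ContDiff ℝ (⊤ : ℕ∞) φ := hη.mul hwy
  have hφc : HasCompactSupport φ := hηc.mul_right
  have hφs : tsupport φ ⊆ tsupport η := tsupport_mul_subset_left
  have hFφ : ∫ z in periodBox n L, F y z = ∫ z, |φ z| ^ p := by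
    rw [← setIntegral_periodBox_of_support hηs (F := fun z => |φ z| ^ p)]
    · refine integral_congr_ae (Filter.Eventually.of_forall fun z => ?_)
      simp only [F, φ, wy, abs_mul]
      rw [Real.mul_rpow (abs_nonneg _) (abs_nonneg _)]
    · intro x hx
      simp [φ, image_eq_zero_of_notMem_tsupport hx, Real.zero_rpow (show p ≠ 0 by linarith)]
  calc yamabeConst n k s * ((1 - τ) * W) ^ (2 / p)
      ≤ yamabeConst n k s * (∫ z, |φ z| ^ p) ^ (2 / p) := by
        rw [← hFφ]
        have : 0 ≤ (1 - τ) * W := mul_nonneg (by linarith) hW0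
        gcongr
    _ ≤ ∫ x, eDens n k s φ x := yamabeConst_le hk hs hφ hφc
    _ = ∫ x in periodBox n L, eDens n k s φ x :=
        (setIntegral_periodBox_of_support hηs fun x hx =>
          eDens_eq_zero_of_notMem fun h => hx (hφs h)).symm
    _ ≤ ∫ x in periodBox n L, (1 + τ) * eDens n k s w (x + y) := by
        have hcont : Continuous fun x => (1 + τ) * eDens n k s w (x + y) :=
          continuous_const.mul ((eDens_continuous hw).comp (by fun_prop))
        refine setIntegral_mono (integrableOn_periodBox hL (eDens_continuous hφ))
          (integrableOn_periodBox hL hcont) fun x => ?_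
        have := eDens_cutoff_le hk hτ hG hs hη hwy (h01 x) (hd x)
        rwa [eDens_comp_add] at this
    _ = (1 + τ) * ∫ x in periodBox n L, eDens n k s w x := by
        rw [integral_const_mul, setIntegral_periodBox_translate hL (eDens_periodic hwp) y]

/-- For large periods the periodic Yamabe quotient is bounded below by any constant smaller than
the Euclidean one. -/
lemma eventually_periodic_sobolev {n k : ℕ} (hk : 3 ≤ k) {s : ℝ} (hs : 0 < s) {C : ℝ}
    (hC0 : 0 ≤ C) (hC : C < yamabeConst n k s) :
    ∀ᶠ L : ℝ in Filter.atTop, ∀ w : EuclideanSpace ℝ (Fin n) → ℝ,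
      ContDiff ℝ (⊤ : ℕ∞) w → IsPeriodicFun n L w →
      C * (∫ x in periodBox n L, |w x| ^ pK k) ^ (2 / pK k)
        ≤ ∫ x in periodBox n L, eDens n k s w x := by
  have hp := pK_gt_two hk
  have ha := aK_pos hk
  have hY : 0 ≤ yamabeConst n k s := hC0.trans hC.le
  have hlim : Filter.Tendsto (fun τ : ℝ => yamabeConst n k s * (1 - τ) ^ (2 / pK k) / (1 + τ))
      (nhdsWithin 0 (Set.Ioi 0)) (nhds (yamabeConst n k s)) := by
    have h1 : ContinuousAt
        (fun τ : ℝ => yamabeConst n k s * (1 - τ) ^ (2 / pK k) / (1 + τ)) 0 := by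
      refine ContinuousAt.div (continuousAt_const.mul ?_) (by fun_prop) (by norm_num)
      exact ContinuousAt.rpow_const (by fun_prop) (Or.inl (by norm_num))
    have h2 := h1.tendsto
    simp only [sub_zero, Real.one_rpow, mul_one, add_zero, div_one] at h2
    exact h2.mono_left nhdsWithin_le_nhds
  obtain ⟨τ, ⟨hτC, hτ1⟩, hτ⟩ := (((hlim.eventually_const_lt hC).and
    ((eventually_lt_nhds one_pos).filter_mono nhdsWithin_le_nhds)).and self_mem_nhdsWithin).exists
  have hτ : 0 < τ := hτ
  -- the largest gradient bound that the zeroth order term can absorb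
  have hq : 0 < τ * s / (aK k * (1 + 1 / τ)) := by positivity
  have hG : aK k * (1 + 1 / τ) * √(τ * s / (aK k * (1 + 1 / τ))) ^ 2 ≤ τ * s := by
    rw [Real.sq_sqrt hq.le]
    exact (mul_div_cancel₀ _ (by positivity)).le
  filter_upwards [Filter.eventually_gt_atTop 0,
    exists_cutoff n (show 0 < pK k by linarith) hτ (Real.sqrt_pos.2 hq)] with L hL hη w hw hwp
  obtain ⟨η, h1, h2, h3, h4, h5, h6⟩ := hη
  have key := periodic_sobolev hk hs hL hτ hG hτ1 hY h1 h2 h3 h4 h5 h6 hw hwp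
  have hW0 : 0 ≤ ∫ x in periodBox n L, |w x| ^ pK k := integral_nonneg fun x => by positivity
  rw [Real.mul_rpow (by linarith) hW0] at key
  have hτC' : C * (1 + τ) ≤ yamabeConst n k s * (1 - τ) ^ (2 / pK k) := by
    rw [lt_div_iff₀ (by linarith)] at hτC
    exact hτC.le
  have h7 := mul_le_mul_of_nonneg_right hτC' (Real.rpow_nonneg hW0 (2 / pK k))
  have h8 : 0 < 1 + τ := by linarith
  refine le_of_mul_le_mul_left (le_trans ?_ key) h8
  linarith

/-! ### A Borsuk–Ulam argument in the plane `V` -/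

/-- By inner regularity the mass of the positive set is lower semicontinuous in the parameter. -/
lemma isClosed_measure_pos_le {n : ℕ} (ν : Measure (EuclideanSpace ℝ (Fin n))) [IsFiniteMeasure ν]
    {g : ℝ → EuclideanSpace ℝ (Fin n) → ℝ} (hg : Continuous (Function.uncurry g)) (c : ENNReal) :
    IsClosed {θ | ν {x | 0 < g θ x} ≤ c} := by
  rw [← isOpen_compl_iff, isOpen_iff_mem_nhds]
  intro θ hθ
  have hθ' : c < ν {x | 0 < g θ x} := not_le.1 hθ
  have ho : IsOpen {x | 0 < g θ x} :=
    isOpen_lt continuous_const (hg.comp (Continuous.prodMk continuous_const continuous_id))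
  -- positivity on a compact set persists for nearby parameters
  obtain ⟨K, hKs, hK, hKc⟩ := ho.exists_lt_isCompact hθ'
  have h := hK.eventually_forall_of_forall_eventually (x₀ := θ) (P := fun θ x => 0 < g θ x)
    fun y hy => (hg.continuousAt (x := (θ, y))).eventually_const_lt (hKs hy)
  filter_upwards [h] with τ hτ
  exact not_le.2 (hKc.trans_le (measure_mono hτ))

/-- Some combination of `b₀` and `b₁` splits the measure `ν` evenly, in the sense that neither
its positive nor its negative set carries more than half of the mass: the set `F` of angles whose
positive set is not too heavy and its antipode are closed and cover the circle. -/
lemma exists_balanced {n : ℕ} (ν : Measure (EuclideanSpace ℝ (Fin n))) [IsFiniteMeasure ν]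
    {b₀ b₁ : EuclideanSpace ℝ (Fin n) → ℝ} (h0 : Continuous b₀) (h1 : Continuous b₁) :
    ∃ θ : ℝ, ν {x | 0 < Real.cos θ * b₀ x + Real.sin θ * b₁ x} ≤ ν Set.univ / 2 ∧
      ν {x | 0 < -(Real.cos θ * b₀ x + Real.sin θ * b₁ x)} ≤ ν Set.univ / 2 := by
  set g : ℝ → EuclideanSpace ℝ (Fin n) → ℝ :=
    fun θ x => Real.cos θ * b₀ x + Real.sin θ * b₁ x with hgdef
  have hg : Continuous (Function.uncurry g) := by
    simp only [hgdef, Function.uncurry_def]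
    fun_prop
  have hg' : Continuous (Function.uncurry fun θ x => -g θ x) := hg.neg
  have hcover : ∀ θ, ν {x | 0 < g θ x} ≤ ν Set.univ / 2 ∨ ν {x | 0 < -g θ x} ≤ ν Set.univ / 2 := by
    intro θ
    by_contra! hcon
    have hgθ : Continuous (g θ) := hg.comp (Continuous.prodMk continuous_const continuous_id)
    have hm : MeasurableSet {x | 0 < -g θ x} :=
      (isOpen_lt continuous_const hgθ.neg).measurableSet
    have hdis : Disjoint {x | 0 < g θ x} {x | 0 < -g θ x} := by
      rw [Set.disjoint_left]
      intro x hx hx'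
      simp only [Set.mem_ofPred_eq] at hx hx'
      linarith
    have h2 := ENNReal.add_lt_add hcon.1 hcon.2
    rw [ENNReal.add_halves, ← measure_union hdis hm] at h2
    exact absurd h2 (not_lt.2 (measure_mono (Set.subset_univ _)))
  have hanti : ∀ θ x, g (θ + Real.pi) x = -g θ x := by
    intro θ x
    simp only [hgdef, Real.cos_add_pi, Real.sin_add_pi]
    ring
  have key := isPreconnected_closed_iff.1 (isPreconnected_univ (α := ℝ)) _ _
    (isClosed_measure_pos_le ν hg (ν Set.univ / 2)) (isClosed_measure_pos_le ν hg' (ν Set.univ / 2))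
    (fun θ _ => hcover θ)
    (by
      rcases hcover 0 with h | h
      · exact ⟨0, trivial, h⟩
      · refine ⟨0 + Real.pi, trivial, ?_⟩
        simpa only [Set.mem_ofPred_eq, hanti] using h)
    (by
      rcases hcover 0 with h | h
      · refine ⟨0 + Real.pi, trivial, ?_⟩
        simpa only [Set.mem_ofPred_eq, hanti, neg_neg] using h
      · exact ⟨0, trivial, h⟩)
  obtain ⟨θ, -, hθ⟩ := key
  exact ⟨θ, hθ⟩

/-! ### Smooth positive parts -/

/-- The smooth approximation `(t + √(t² + δ²) - δ) / 2` of the positive part of `t`. -/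
def sPos (δ t : ℝ) : ℝ := (t + √(t ^ 2 + δ ^ 2) - δ) / 2

lemma sPos_contDiff {δ : ℝ} (hδ : 0 < δ) : ContDiff ℝ (⊤ : ℕ∞) (sPos δ) := by
  unfold sPos
  refine ContDiff.div_const (ContDiff.sub (contDiff_id.add ?_) contDiff_const) 2
  exact ContDiff.sqrt ((contDiff_id.pow 2).add contDiff_const) fun x => by positivity

lemma sPos_hasDerivAt {δ : ℝ} (hδ : 0 < δ) (t : ℝ) :
    HasDerivAt (sPos δ) ((1 + t / √(t ^ 2 + δ ^ 2)) / 2) t := by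
  have h1 : HasDerivAt (fun t : ℝ => t ^ 2 + δ ^ 2) (2 * t) t := by
    simpa using (hasDerivAt_pow 2 t).add_const (δ ^ 2)
  have h2 := h1.sqrt (by positivity)
  have h3 := (((hasDerivAt_id t).add h2).sub_const δ).div_const 2
  rw [mul_div_mul_left _ _ two_ne_zero] at h3
  exact h3

lemma sPos_sq_add {δ : ℝ} (hδ : 0 ≤ δ) (t : ℝ) : sPos δ t ^ 2 + sPos δ (-t) ^ 2 ≤ t ^ 2 := by
  unfold sPos
  rw [neg_sq]
  have h1 : √(t ^ 2 + δ ^ 2) ≤ |t| + δ := by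
    rw [Real.sqrt_le_left (by positivity)]
    nlinarith [sq_abs t, mul_nonneg (abs_nonneg t) hδ]
  have h2 : δ ≤ √(t ^ 2 + δ ^ 2) := Real.le_sqrt_of_sq_le (by nlinarith [sq_nonneg t])
  set r := √(t ^ 2 + δ ^ 2)
  have h3 : (r - δ) ^ 2 ≤ t ^ 2 := by
    rw [← sq_abs t]
    gcongr
    linarith
  nlinarith

lemma sPos_abs_le {δ : ℝ} (hδ : 0 ≤ δ) (t : ℝ) : |sPos δ t| ≤ |t| := by
  apply sq_le_sq.1
  have := sPos_sq_add hδ t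
  nlinarith [sq_nonneg (sPos δ (-t))]

lemma sPos_zero (t : ℝ) : sPos 0 t = max t 0 := by
  unfold sPos
  simp only [ne_eq, OfNat.ofNat_ne_zero, not_false_eq_true, zero_pow, add_zero, sub_zero,
    Real.sqrt_sq_eq_abs]
  rcases le_total 0 t with h | h
  · rw [abs_of_nonneg h, max_eq_left h]; ring
  · rw [abs_of_nonpos h, max_eq_right h]; ring

/-- The smooth positive and negative parts together have at most the energy of `v`. -/
lemma eDens_sPos_add {n k : ℕ} (hk : 3 ≤ k) {s : ℝ} (hs : 0 < s) {δ : ℝ} (hδ : 0 < δ)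
    {v : EuclideanSpace ℝ (Fin n) → ℝ} (hv : ContDiff ℝ (⊤ : ℕ∞) v)
    (x : EuclideanSpace ℝ (Fin n)) :
    eDens n k s (fun y => sPos δ (v y)) x + eDens n k s (fun y => sPos δ (-v y)) x
      ≤ eDens n k s v x := by
  have ha := aK_pos hk
  have hd : HasFDerivAt v (fderiv ℝ v x) x :=
    (hv.differentiable (by simp)).differentiableAt.hasFDerivAt
  have h1 := (sPos_hasDerivAt hδ (v x)).comp_hasFDerivAt x hd
  have h2 := (sPos_hasDerivAt hδ (-v x)).comp_hasFDerivAt x hd.neg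
  unfold eDens
  rw [norm_gradient_eq, norm_gradient_eq, norm_gradient_eq]
  have e1 : fderiv ℝ (fun y => sPos δ (v y)) x = _ := h1.fderiv
  have e2 : fderiv ℝ (fun y => sPos δ (-v y)) x = _ := h2.fderiv
  rw [e1, e2, norm_smul, norm_smul, norm_neg, mul_pow, mul_pow, Real.norm_eq_abs, Real.norm_eq_abs,
    sq_abs, sq_abs, neg_sq, neg_div]
  set q := v x / √(v x ^ 2 + δ ^ 2) with hq
  have hq1 : q ^ 2 ≤ 1 := by
    rw [hq, div_pow, Real.sq_sqrt (by positivity), div_le_one (by positivity)]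
    nlinarith [sq_nonneg δ]
  have h3 := sPos_sq_add hδ.le (v x)
  have h4 : ((1 + q) / 2) ^ 2 + ((1 + -q) / 2) ^ 2 ≤ 1 := by nlinarith
  have h5 := mul_le_mul_of_nonneg_left h4 (mul_nonneg ha.le (sq_nonneg ‖fderiv ℝ v x‖))
  have h6 := mul_le_mul_of_nonneg_left h3 hs.le
  nlinarith

lemma tendsto_integral_sPos {n : ℕ} {L : ℝ} (hL : 0 < L) {p : ℝ} (hp : 0 < p)
    {v : EuclideanSpace ℝ (Fin n) → ℝ} (hv : Continuous v) :
    Filter.Tendsto (fun δ : ℝ => ∫ x in periodBox n L, |sPos δ (v x)| ^ p)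
      (nhdsWithin 0 (Set.Ioi 0)) (nhds (∫ x in periodBox n L, max (v x) 0 ^ p)) := by
  have hcont : ∀ x, Continuous fun δ : ℝ => |sPos δ (v x)| ^ p := fun x =>
    rpow_continuous_of_nonneg (by unfold sPos; fun_prop) hp.le
  have hcont' : ∀ δ, Continuous fun x => |sPos δ (v x)| ^ p := fun δ =>
    rpow_continuous_of_nonneg (by unfold sPos; fun_prop) hp.le
  refine tendsto_integral_filter_of_dominated_convergence (fun x => |v x| ^ p) ?_ ?_
    (integrableOn_periodBox hL (rpow_continuous_of_nonneg hv.abs hp.le)) ?_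
  · exact Filter.Eventually.of_forall fun δ => (hcont' δ).aestronglyMeasurable
  · filter_upwards [self_mem_nhdsWithin] with δ hδ
    refine Filter.Eventually.of_forall fun x => ?_
    rw [Real.norm_of_nonneg (by positivity)]
    have := sPos_abs_le (le_of_lt hδ) (v x)
    gcongr
  · refine Filter.Eventually.of_forall fun x => ?_
    have h := ((hcont x).tendsto 0).mono_left (nhdsWithin_le_nhds (s := Set.Ioi 0))
    rwa [sPos_zero, abs_of_nonneg (le_max_right _ _)] at h

/-- The periodic Sobolev-type inequality passes to positive and negative parts. -/
lemma sobolev_pos_neg {n k : ℕ} (hk : 3 ≤ k) {s : ℝ} (hs : 0 < s) {L : ℝ} (hL : 0 < L) {C : ℝ}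
    (hS : ∀ w : EuclideanSpace ℝ (Fin n) → ℝ,
      ContDiff ℝ (⊤ : ℕ∞) w → IsPeriodicFun n L w →
      C * (∫ x in periodBox n L, |w x| ^ pK k) ^ (2 / pK k)
        ≤ ∫ x in periodBox n L, eDens n k s w x)
    {v : EuclideanSpace ℝ (Fin n) → ℝ} (hv : ContDiff ℝ (⊤ : ℕ∞) v) (hvp : IsPeriodicFun n L v) :
    C * (∫ x in periodBox n L, max (v x) 0 ^ pK k) ^ (2 / pK k)
      + C * (∫ x in periodBox n L, max (-v x) 0 ^ pK k) ^ (2 / pK k)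
      ≤ ∫ x in periodBox n L, eDens n k s v x := by
  have hp := pK_gt_two hk
  have hp0 : 0 < pK k := by linarith
  have t1 := ((tendsto_integral_sPos hL hp0 hv.continuous).rpow_const
    (p := 2 / pK k) (Or.inr (by positivity))).const_mul C
  have t2 := ((tendsto_integral_sPos hL hp0 hv.continuous.neg).rpow_const
    (p := 2 / pK k) (Or.inr (by positivity))).const_mul C
  refine le_of_tendsto (t1.add t2) ?_
  filter_upwards [self_mem_nhdsWithin] with δ hδ
  have hδ : 0 < δ := hδ
  have w1 : ContDiff ℝ (⊤ : ℕ∞) fun y => sPos δ (v y) := (sPos_contDiff hδ).comp hv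
  have w2 : ContDiff ℝ (⊤ : ℕ∞) fun y => sPos δ (-v y) := (sPos_contDiff hδ).comp hv.neg
  have k1 := hS _ w1 fun x i => by simp only [hvp x i]
  have k2 := hS _ w2 fun x i => by simp only [hvp x i]
  refine (add_le_add k1 k2).trans ?_
  rw [← integral_add (integrableOn_periodBox hL (eDens_continuous w1))
    (integrableOn_periodBox hL (eDens_continuous w2))]
  exact setIntegral_mono (integrableOn_periodBox hL ((eDens_continuous w1).add
    (eDens_continuous w2))) (integrableOn_periodBox hL (eDens_continuous hv))
    fun x => eDens_sPos_add hk hs hδ hv x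

/-! ### The lower bound -/

/-- Hölder's inequality on the support of `w`, over which `u^p` has mass at most `M`. -/
lemma weighted_le_of_half {n k : ℕ} (hk : 3 ≤ k) {L : ℝ} (hL : 0 < L)
    {u w : EuclideanSpace ℝ (Fin n) → ℝ} (hu : Continuous u) (hu0 : ∀ x, 0 < u x)
    (hw : Continuous w) (hw0 : ∀ x, 0 ≤ w x) {M : ℝ}
    (hM : ∫ x in periodBox n L ∩ {x | 0 < w x}, u x ^ pK k ≤ M) :
    ∫ x in periodBox n L, u x ^ (pK k - 2) * w x ^ 2
      ≤ M ^ (2 / (k : ℝ)) * (∫ x in periodBox n L, w x ^ pK k) ^ (2 / pK k) := by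
  have hp := pK_gt_two hk
  have hk' : (3 : ℝ) ≤ k := by exact_mod_cast hk
  have hk2 : (k : ℝ) - 2 ≠ 0 := by linarith
  set S := periodBox n L ∩ {x | 0 < w x} with hSdef
  have hB := measurableSet_periodBox n hL
  have hSm : MeasurableSet S := hB.inter (isOpen_lt continuous_const hw).measurableSet
  have hSB : S ⊆ periodBox n L := Set.inter_subset_left
  have hwz : ∀ x ∈ periodBox n L \ S, w x = 0 := by
    intro x hx
    by_contra h
    exact hx.2 ⟨hx.1, lt_of_le_of_ne (hw0 x) (Ne.symm h)⟩
  have e1 : ∫ x in periodBox n L, u x ^ (pK k - 2) * w x ^ 2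
      = ∫ x in S, u x ^ (pK k - 2) * w x ^ 2 :=
    setIntegral_eq_of_subset_of_forall_sdiff_eq_zero hB hSB fun x hx => by
      rw [hwz x hx]; simp
  have hfin : IsFiniteMeasure (volume.restrict S) :=
    ⟨by
      rw [Measure.restrict_apply_univ]
      exact (measure_mono hSB).trans_lt (volume_periodBox_lt_top n hL)⟩
  have hmem : ∀ {f : EuclideanSpace ℝ (Fin n) → ℝ} (q : ENNReal), Continuous f →
      MemLp f q (volume.restrict S) := by
    intro f q hf
    obtain ⟨C, -, hC⟩ := bounded_on_periodBox hL hf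
    refine MemLp.of_bound hf.aestronglyMeasurable C ?_
    filter_upwards [ae_restrict_mem hSm] with x hx using hC x (hSB hx)
  have hconj : ((k : ℝ) / 2).HolderConjugate (pK k / 2) := by
    rw [Real.holderConjugate_iff]
    refine ⟨by linarith, ?_⟩
    rw [inv_div, inv_div, two_div_pK hk]
    ring
  have hup : Continuous fun x => u x ^ (pK k - 2) :=
    rpow_continuous_of_nonneg hu (by linarith)
  have h := integral_mul_le_Lp_mul_Lq_of_nonneg (μ := volume.restrict S) hconj
    (f := fun x => u x ^ (pK k - 2)) (g := fun x => w x ^ 2)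
    (Filter.Eventually.of_forall fun x => Real.rpow_nonneg (hu0 x).le _)
    (Filter.Eventually.of_forall fun x => sq_nonneg _) (hmem _ hup) (hmem _ (hw.pow 2))
  have e2 : ∀ x, (u x ^ (pK k - 2)) ^ ((k : ℝ) / 2) = u x ^ pK k := by
    intro x
    rw [← Real.rpow_mul (hu0 x).le]
    congr 1
    unfold pK
    field_simp
    ring
  have e3 : ∀ x, (w x ^ 2) ^ (pK k / 2) = w x ^ pK k := by
    intro x
    rw [← Real.rpow_natCast, ← Real.rpow_mul (hw0 x)]
    congr 1
    push_cast
    ring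
  simp only [e2, e3, one_div_div] at h
  rw [e1]
  refine h.trans ?_
  have hwp : ∀ x, 0 ≤ w x ^ pK k := fun x => Real.rpow_nonneg (hw0 x) _
  have hI : ∫ x in S, w x ^ pK k ≤ ∫ x in periodBox n L, w x ^ pK k :=
    setIntegral_mono_set (integrableOn_periodBox hL (rpow_continuous_of_nonneg hw (by linarith)))
      (Filter.Eventually.of_forall hwp) (Filter.Eventually.of_forall hSB)
  have hI0 : 0 ≤ ∫ x in S, w x ^ pK k := integral_nonneg hwp
  have hU0 : 0 ≤ ∫ x in S, u x ^ pK k := integral_nonneg fun x => Real.rpow_nonneg (hu0 x).le _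
  have hpp : 0 ≤ 2 / pK k := by positivity
  have hM0 : 0 ≤ M := hU0.trans hM
  gcongr

/-- A combination of `b₀` and `b₁` both of whose sign sets carry at most half of the
`L^p` mass of `u` over a period. -/
lemma exists_balanced_real {n : ℕ} {L : ℝ} (hL : 0 < L) {p : ℝ} (hp : 0 ≤ p)
    {u b₀ b₁ : EuclideanSpace ℝ (Fin n) → ℝ} (hu : Continuous u) (hu0 : ∀ x, 0 < u x)
    (h0 : Continuous b₀) (h1 : Continuous b₁) :
    ∃ θ : ℝ, ∫ x in periodBox n L ∩ {x | 0 < Real.cos θ * b₀ x + Real.sin θ * b₁ x}, u x ^ p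
        ≤ (∫ x in periodBox n L, u x ^ p) / 2 ∧
      ∫ x in periodBox n L ∩ {x | 0 < -(Real.cos θ * b₀ x + Real.sin θ * b₁ x)}, u x ^ p
        ≤ (∫ x in periodBox n L, u x ^ p) / 2 := by
  have hup : IntegrableOn (fun x => u x ^ p) (periodBox n L) :=
    integrableOn_periodBox hL (rpow_continuous_of_nonneg hu hp)
  have hpos : ∀ x, 0 ≤ u x ^ p := fun x => Real.rpow_nonneg (hu0 x).le _
  have hB := measurableSet_periodBox n hL
  set ν := (volume.restrict (periodBox n L)).withDensity fun x => ENNReal.ofReal (u x ^ p) with hν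
  have hfin : IsFiniteMeasure ν := isFiniteMeasure_withDensity_ofReal hup.2
  have hval : ∀ A, MeasurableSet A →
      ν A = ENNReal.ofReal (∫ x in periodBox n L ∩ A, u x ^ p) := by
    intro A hA
    rw [hν, withDensity_apply _ hA, Measure.restrict_restrict hA, Set.inter_comm,
      ofReal_integral_eq_lintegral_ofReal (hup.mono_set Set.inter_subset_left)
        (Filter.Eventually.of_forall hpos)]
  have hT : 0 ≤ ∫ x in periodBox n L, u x ^ p := integral_nonneg hpos
  have hreal : ∀ A, MeasurableSet A → ν A ≤ ν Set.univ / 2 →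
      ∫ x in periodBox n L ∩ A, u x ^ p ≤ (∫ x in periodBox n L, u x ^ p) / 2 := by
    intro A hA h
    rw [hval A hA, hval _ MeasurableSet.univ, Set.inter_univ] at h
    have e : ENNReal.ofReal (∫ x in periodBox n L, u x ^ p) / 2
        = ENNReal.ofReal ((∫ x in periodBox n L, u x ^ p) / 2) := by
      rw [ENNReal.ofReal_div_of_pos two_pos]; simp
    rw [e] at h
    exact (ENNReal.ofReal_le_ofReal_iff (by positivity)).1 h
  obtain ⟨θ, ha, hb⟩ := exists_balanced ν h0 h1
  have hg : Continuous fun x => Real.cos θ * b₀ x + Real.sin θ * b₁ x := by fun_prop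
  exact ⟨θ, hreal _ (isOpen_lt continuous_const hg).measurableSet ha,
    hreal _ (isOpen_lt continuous_const hg.neg).measurableSet hb⟩

/-- The Rayleigh quotient of a balanced function is large. -/
lemma rayleigh_ge_of_balanced {n k : ℕ} (hk : 3 ≤ k) {s : ℝ} (hs : 0 < s) {L : ℝ} (hL : 0 < L)
    {C : ℝ} (hC : 0 ≤ C)
    (hS : ∀ w : EuclideanSpace ℝ (Fin n) → ℝ,
      ContDiff ℝ (⊤ : ℕ∞) w → IsPeriodicFun n L w →
      C * (∫ x in periodBox n L, |w x| ^ pK k) ^ (2 / pK k)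
        ≤ ∫ x in periodBox n L, eDens n k s w x)
    {u v : EuclideanSpace ℝ (Fin n) → ℝ} (hu : Continuous u) (hu0 : ∀ x, 0 < u x)
    (hv : ContDiff ℝ (⊤ : ℕ∞) v) (hvp : IsPeriodicFun n L v)
    (hD : 0 < ∫ x in periodBox n L, u x ^ (pK k - 2) * v x ^ 2)
    (hpos : ∫ x in periodBox n L ∩ {x | 0 < v x}, u x ^ pK k
      ≤ (∫ x in periodBox n L, u x ^ pK k) / 2)
    (hneg : ∫ x in periodBox n L ∩ {x | 0 < -v x}, u x ^ pK k
      ≤ (∫ x in periodBox n L, u x ^ pK k) / 2) :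
    C * 2 ^ (2 / (k : ℝ)) ≤ (∫ x in periodBox n L, eDens n k s v x) /
        (∫ x in periodBox n L, u x ^ (pK k - 2) * v x ^ 2) *
          (∫ x in periodBox n L, u x ^ pK k) ^ (2 / (k : ℝ)) := by
  have hp := pK_gt_two hk
  have hvc := hv.continuous
  set T := ∫ x in periodBox n L, u x ^ pK k with hTdef
  have hT : 0 ≤ T := integral_nonneg fun x => Real.rpow_nonneg (hu0 x).le _
  have c1 : Continuous fun x => max (v x) 0 := by fun_prop
  have c2 : Continuous fun x => max (-v x) 0 := by fun_prop
  have a1 := weighted_le_of_half hk hL hu hu0 c1 (fun x => le_max_right _ _) (M := T / 2)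
    (by simpa only [lt_max_iff, lt_irrefl, or_false] using hpos)
  have a2 := weighted_le_of_half hk hL hu hu0 c2 (fun x => le_max_right _ _) (M := T / 2)
    (by simpa only [lt_max_iff, lt_irrefl, or_false] using hneg)
  have hup : Continuous fun x => u x ^ (pK k - 2) :=
    rpow_continuous_of_nonneg hu (by linarith)
  have e : ∫ x in periodBox n L, u x ^ (pK k - 2) * v x ^ 2
      = (∫ x in periodBox n L, u x ^ (pK k - 2) * max (v x) 0 ^ 2)
        + ∫ x in periodBox n L, u x ^ (pK k - 2) * max (-v x) 0 ^ 2 := by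
    have d1 : Continuous fun x => u x ^ (pK k - 2) * max (v x) 0 ^ 2 := hup.mul (c1.pow 2)
    have d2 : Continuous fun x => u x ^ (pK k - 2) * max (-v x) 0 ^ 2 := hup.mul (c2.pow 2)
    rw [← integral_add (integrableOn_periodBox hL d1) (integrableOn_periodBox hL d2)]
    congr 1
    funext x
    rcases le_total 0 (v x) with h | h
    · rw [max_eq_left h, max_eq_right (by linarith)]; ring
    · rw [max_eq_right h, max_eq_left (by linarith)]; ring
  have b := sobolev_pos_neg hk hs hL hS hv hvp
  set D := ∫ x in periodBox n L, u x ^ (pK k - 2) * v x ^ 2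
  set N := ∫ x in periodBox n L, eDens n k s v x
  set A := (∫ x in periodBox n L, max (v x) 0 ^ pK k) ^ (2 / pK k)
  set B := (∫ x in periodBox n L, max (-v x) 0 ^ pK k) ^ (2 / pK k)
  rw [Real.div_rpow hT two_pos.le] at a1 a2
  have h2 : (0 : ℝ) < 2 ^ (2 / (k : ℝ)) := by positivity
  have hTk : 0 ≤ T ^ (2 / (k : ℝ)) := Real.rpow_nonneg hT _
  set Q := T ^ (2 / (k : ℝ))
  set R := (2 : ℝ) ^ (2 / (k : ℝ))
  have hDle : D * R ≤ Q * (A + B) := by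
    have : D ≤ Q / R * (A + B) := by rw [e, mul_add]; exact add_le_add a1 a2
    rw [div_mul_eq_mul_div, le_div_iff₀ h2] at this
    exact this
  rw [div_mul_eq_mul_div, le_div_iff₀ hD]
  calc C * R * D = C * (D * R) := by ring
    _ ≤ C * (Q * (A + B)) := mul_le_mul_of_nonneg_left hDle hC
    _ = Q * (C * A + C * B) := by ring
    _ ≤ Q * N := mul_le_mul_of_nonneg_left b hTk
    _ = N * Q := mul_comm _ _

lemma eDens_comb_le {n k : ℕ} (hk : 3 ≤ k) {s : ℝ} (hs : 0 < s)
    {f g : EuclideanSpace ℝ (Fin n) → ℝ} (hf : ContDiff ℝ (⊤ : ℕ∞) f)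
    (hg : ContDiff ℝ (⊤ : ℕ∞) g) (a c : ℝ) (x : EuclideanSpace ℝ (Fin n)) :
    eDens n k s (fun y => a * f y + c * g y) x
      ≤ 2 * (a ^ 2 * eDens n k s f x + c ^ 2 * eDens n k s g x) := by
  have ha := aK_pos hk
  have hdf : HasFDerivAt f (fderiv ℝ f x) x :=
    (hf.differentiable (by simp)).differentiableAt.hasFDerivAt
  have hdg : HasFDerivAt g (fderiv ℝ g x) x :=
    (hg.differentiable (by simp)).differentiableAt.hasFDerivAt
  have e : fderiv ℝ (fun y => a * f y + c * g y) x = _ :=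
    ((hdf.const_mul a).add (hdg.const_mul c)).fderiv
  unfold eDens
  rw [norm_gradient_eq, norm_gradient_eq, norm_gradient_eq, e]
  have h1 : ‖a • fderiv ℝ f x + c • fderiv ℝ g x‖ ^ 2
      ≤ 2 * (a ^ 2 * ‖fderiv ℝ f x‖ ^ 2 + c ^ 2 * ‖fderiv ℝ g x‖ ^ 2) := by
    have h := norm_add_le (a • fderiv ℝ f x) (c • fderiv ℝ g x)
    rw [norm_smul, norm_smul, Real.norm_eq_abs, Real.norm_eq_abs] at h
    have h' := pow_le_pow_left₀ (norm_nonneg _) h 2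
    rw [← sq_abs a, ← sq_abs c]
    nlinarith [sq_nonneg (|a| * ‖fderiv ℝ f x‖ - |c| * ‖fderiv ℝ g x‖)]
  have h2 : (a * f x + c * g x) ^ 2 ≤ 2 * (a ^ 2 * f x ^ 2 + c ^ 2 * g x ^ 2) := by
    nlinarith [sq_nonneg (a * f x - c * g x)]
  have h3 := mul_le_mul_of_nonneg_left h1 ha.le
  have h4 := mul_le_mul_of_nonneg_left h2 hs.le
  linarith

/-- A plane of functions, described by the combinations of two independent elements. -/
lemma exists_spanning_pair {X : Type*} {V : Submodule ℝ (X → ℝ)} (hV : Module.finrank ℝ V = 2) :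
    ∃ b₀ ∈ V, ∃ b₁ ∈ V, (∀ a c : ℝ, (fun x => a * b₀ x + c * b₁ x) ∈ V) ∧
      (∀ a c : ℝ, (fun x => a * b₀ x + c * b₁ x) = 0 → a = 0 ∧ c = 0) ∧
      ∀ v ∈ V, ∃ a c : ℝ, v = fun x => a * b₀ x + c * b₁ x := by
  have hfin : Module.Finite ℝ V := Module.finite_of_finrank_eq_succ hV
  let b := Module.finBasisOfFinrankEq ℝ V hV
  have hcomb : ∀ a c : ℝ, (fun x => a * (b 0 : X → ℝ) x + c * (b 1 : X → ℝ) x)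
      = ((a • b 0 + c • b 1 : V) : X → ℝ) := by
    intro a c
    funext x
    simp
  refine ⟨b 0, (b 0).2, b 1, (b 1).2, fun a c => ?_, fun a c h => ?_, fun v hv => ?_⟩
  · rw [hcomb]
    exact Subtype.mem _
  · rw [hcomb, Submodule.coe_eq_zero] at h
    have hl := Fintype.linearIndependent_iff.1 b.linearIndependent ![a, c] (by simpa using h)
    exact ⟨by simpa using hl 0, by simpa using hl 1⟩
  · refine ⟨b.repr ⟨v, hv⟩ 0, b.repr ⟨v, hv⟩ 1, ?_⟩
    rw [hcomb]
    have h := b.sum_repr ⟨v, hv⟩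
    rw [Fin.sum_univ_two] at h
    rw [h]

lemma weighted_pos {n k : ℕ} (hk : 3 ≤ k) {L : ℝ} (hL : 0 < L)
    {u v : EuclideanSpace ℝ (Fin n) → ℝ} (hu : Continuous u) (hup : IsPeriodicFun n L u)
    (hu0 : ∀ x, 0 < u x) (hv : Continuous v) (hvp : IsPeriodicFun n L v) (hv0 : v ≠ 0) :
    0 < ∫ x in periodBox n L, u x ^ (pK k - 2) * v x ^ 2 := by
  have hp := pK_gt_two hk
  obtain ⟨x₀, hx₀⟩ := Function.ne_iff.1 hv0
  have hx₀' : v x₀ ≠ 0 := hx₀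
  refine setIntegral_periodBox_pos hL (x₀ := x₀) (fun x i => by simp only [hup x i, hvp x i])
    ((rpow_continuous_of_nonneg hu (by linarith)).mul (hv.pow 2))
    (fun x => mul_nonneg (Real.rpow_nonneg (hu0 x).le _) (sq_nonneg _)) ?_
  have := Real.rpow_pos_of_pos (hu0 x₀) (pK k - 2)
  positivity

/-- The Rayleigh quotients over a plane are bounded above. With `D₀`, `D₁`, `D₀₁` the Gram matrix
of the weighted pairing and `G` its determinant, `(D₀ + D₁) D(v) ≥ G (a² + c²)`. -/
lemma bddAbove_rayleigh {n k : ℕ} (hk : 3 ≤ k) {s : ℝ} (hs : 0 < s) {L : ℝ} (hL : 0 < L)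
    {u : EuclideanSpace ℝ (Fin n) → ℝ} (hu : Continuous u) (hup : IsPeriodicFun n L u)
    (hu0 : ∀ x, 0 < u x) {V : Submodule ℝ (EuclideanSpace ℝ (Fin n) → ℝ)}
    (hV : Module.finrank ℝ V = 2) (hVs : ∀ v ∈ V, ContDiff ℝ (⊤ : ℕ∞) v ∧ IsPeriodicFun n L v)
    (Q : ℝ) (hQ : 0 ≤ Q) :
    BddAbove {t | ∃ v ∈ V, v ≠ 0 ∧ t = (∫ x in periodBox n L, eDens n k s v x) /
        (∫ x in periodBox n L, u x ^ (pK k - 2) * v x ^ 2) * Q} := by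
  have hp := pK_gt_two hk
  obtain ⟨b₀, hb₀, b₁, hb₁, hmem, hind, hspan⟩ := exists_spanning_pair hV
  have s0 := (hVs _ hb₀).1
  have s1 := (hVs _ hb₁).1
  have k0 := s0.continuous
  have k1 := s1.continuous
  have hw : Continuous fun x => u x ^ (pK k - 2) :=
    rpow_continuous_of_nonneg hu (by linarith)
  set D₀ := ∫ x in periodBox n L, u x ^ (pK k - 2) * b₀ x ^ 2
  set D₁ := ∫ x in periodBox n L, u x ^ (pK k - 2) * b₁ x ^ 2
  set D₀₁ := ∫ x in periodBox n L, u x ^ (pK k - 2) * (b₀ x * b₁ x)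
  set N₀ := ∫ x in periodBox n L, eDens n k s b₀ x
  set N₁ := ∫ x in periodBox n L, eDens n k s b₁ x
  have hN₀ : 0 ≤ N₀ := integral_nonneg fun x => eDens_nonneg hk hs _ x
  have hN₁ : 0 ≤ N₁ := integral_nonneg fun x => eDens_nonneg hk hs _ x
  have hD : ∀ a c : ℝ, ∫ x in periodBox n L, u x ^ (pK k - 2) * (a * b₀ x + c * b₁ x) ^ 2
      = a ^ 2 * D₀ + 2 * a * c * D₀₁ + c ^ 2 * D₁ := by
    intro a c
    have m0 : Continuous fun x => u x ^ (pK k - 2) * b₀ x ^ 2 := hw.mul (k0.pow 2)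
    have m01 : Continuous fun x => u x ^ (pK k - 2) * (b₀ x * b₁ x) := hw.mul (k0.mul k1)
    have m1 : Continuous fun x => u x ^ (pK k - 2) * b₁ x ^ 2 := hw.mul (k1.pow 2)
    have m2 : Continuous fun x => a ^ 2 * (u x ^ (pK k - 2) * b₀ x ^ 2)
        + 2 * a * c * (u x ^ (pK k - 2) * (b₀ x * b₁ x)) :=
      (continuous_const.mul m0).add (continuous_const.mul m01)
    have i0 := (integrableOn_periodBox hL m0).const_mul (a ^ 2)
    have i01 := (integrableOn_periodBox hL m01).const_mul (2 * a * c)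
    have i1 := (integrableOn_periodBox hL m1).const_mul (c ^ 2)
    rw [← integral_const_mul, ← integral_const_mul, ← integral_const_mul,
      ← integral_add i0 i01, ← integral_add (integrableOn_periodBox hL m2) i1]
    congr 1
    funext x
    ring
  have hDpos : ∀ a c : ℝ, ¬ (a = 0 ∧ c = 0) → 0 < a ^ 2 * D₀ + 2 * a * c * D₀₁ + c ^ 2 * D₁ := by
    intro a c h
    rw [← hD]
    have hm := hVs _ (hmem a c)
    exact weighted_pos hk hL hu hup hu0 hm.1.continuous hm.2 fun h' => h (hind a c h')
  have hD₀ : 0 < D₀ := by simpa using hDpos 1 0 (by simp)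
  have hD₁ : 0 < D₁ := by simpa using hDpos 0 1 (by simp)
  have hG : 0 < D₀ * D₁ - D₀₁ ^ 2 := by
    -- the form takes the value `D₀ * G` at `(D₀₁, -D₀)`
    have h := hDpos D₀₁ (-D₀) (fun h => hD₀.ne' (by linarith [h.2]))
    have h' : 0 < D₀ * (D₀ * D₁ - D₀₁ ^ 2) := by linarith
    exact (mul_pos_iff_of_pos_left hD₀).1 h'
  set G := D₀ * D₁ - D₀₁ ^ 2 with hGdef
  refine ⟨2 * (N₀ + N₁) * (D₀ + D₁) / G * Q, ?_⟩
  rintro t ⟨v, hv, hv0, rfl⟩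
  obtain ⟨a, c, rfl⟩ := hspan v hv
  have hac : ¬ (a = 0 ∧ c = 0) := by
    rintro ⟨rfl, rfl⟩
    exact hv0 (by funext x; simp)
  refine mul_le_mul_of_nonneg_right ?_ hQ
  rw [hD, div_le_div_iff₀ (hDpos a c hac) hG]
  have h1 : ∫ x in periodBox n L, eDens n k s (fun y => a * b₀ y + c * b₁ y) x
      ≤ 2 * (a ^ 2 * N₀ + c ^ 2 * N₁) := by
    have j0 := (integrableOn_periodBox hL (eDens_continuous (k := k) (s := s) s0)).const_mul (a ^ 2)
    have j1 := (integrableOn_periodBox hL (eDens_continuous (k := k) (s := s) s1)).const_mul (c ^ 2)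
    rw [← integral_const_mul, ← integral_const_mul, ← integral_add j0 j1, ← integral_const_mul]
    exact setIntegral_mono (integrableOn_periodBox hL (eDens_continuous (hVs _ hv).1))
      ((j0.add j1).const_mul 2) fun x => eDens_comb_le hk hs s0 s1 a c x
  have h2 : 2 * (a ^ 2 * N₀ + c ^ 2 * N₁) ≤ 2 * (N₀ + N₁) * (a ^ 2 + c ^ 2) := by
    nlinarith [mul_nonneg (sq_nonneg a) hN₁, mul_nonneg (sq_nonneg c) hN₀]
  have h3 : (a ^ 2 + c ^ 2) * G
      ≤ (D₀ + D₁) * (a ^ 2 * D₀ + 2 * a * c * D₀₁ + c ^ 2 * D₁) := by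
    rw [hGdef]
    nlinarith [sq_nonneg (a * D₀ + c * D₀₁), sq_nonneg (a * D₀₁ + c * D₁)]
  calc _ ≤ 2 * (N₀ + N₁) * (a ^ 2 + c ^ 2) * G :=
        mul_le_mul_of_nonneg_right (h1.trans h2) hG.le
    _ = 2 * (N₀ + N₁) * ((a ^ 2 + c ^ 2) * G) := by ring
    _ ≤ 2 * (N₀ + N₁) * ((D₀ + D₁) * (a ^ 2 * D₀ + 2 * a * c * D₀₁ + c ^ 2 * D₁)) :=
        mul_le_mul_of_nonneg_left h3 (by positivity)
    _ = _ := by ring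

/-- A constant in the periodic Sobolev-type inequality bounds every competitor of the min-max problem
from below, with the gain `2^{2/k}`. -/
lemma y2PerSet_ge {n k : ℕ} (hk : 3 ≤ k) {s : ℝ} (hs : 0 < s) {L : ℝ} (hL : 0 < L)
    {C : ℝ} (hC : 0 ≤ C)
    (hS : ∀ w : EuclideanSpace ℝ (Fin n) → ℝ,
      ContDiff ℝ (⊤ : ℕ∞) w → IsPeriodicFun n L w →
      C * (∫ x in periodBox n L, |w x| ^ pK k) ^ (2 / pK k)
        ≤ ∫ x in periodBox n L, eDens n k s w x)
    {r : ℝ} (hr : r ∈ y2PerSet n k s L) : C * 2 ^ (2 / (k : ℝ)) ≤ r := by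
  have hp := pK_gt_two hk
  obtain ⟨u, V, hu, hup, hu0, hV, hVs, rfl⟩ := hr
  obtain ⟨b₀, hb₀, b₁, hb₁, hmem, hind, -⟩ := exists_spanning_pair hV
  obtain ⟨θ, hpos, hneg⟩ := exists_balanced_real hL (p := pK k) (by linarith) hu.continuous hu0
    (hVs _ hb₀).1.continuous (hVs _ hb₁).1.continuous
  set v := fun x => Real.cos θ * b₀ x + Real.sin θ * b₁ x with hvdef
  have hv : v ∈ V := hmem _ _
  have hv0 : v ≠ 0 := by
    intro h
    obtain ⟨h1, h2⟩ := hind _ _ h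
    have := Real.sin_sq_add_cos_sq θ
    rw [h1, h2] at this
    norm_num at this
  have hD := weighted_pos hk hL hu.continuous hup hu0 (hVs v hv).1.continuous (hVs v hv).2 hv0
  have hT : 0 ≤ ∫ x in periodBox n L, u x ^ pK k :=
    integral_nonneg fun x => Real.rpow_nonneg (hu0 x).le _
  refine (rayleigh_ge_of_balanced hk hs hL hC hS hu.continuous hu0 (hVs v hv).1 (hVs v hv).2 hD
    hpos hneg).trans ?_
  exact le_csSup (bddAbove_rayleigh hk hs hL hu.continuous hup hu0 hV hVs _
    (Real.rpow_nonneg hT _)) ⟨v, hv, hv0, rfl⟩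

lemma y2PerSet_nonneg {n k : ℕ} (hk : 3 ≤ k) {s : ℝ} (hs : 0 < s) {L : ℝ} {r : ℝ}
    (hr : r ∈ y2PerSet n k s L) : 0 ≤ r := by
  obtain ⟨u, V, -, -, hu0, -, -, rfl⟩ := hr
  refine Real.sSup_nonneg ?_
  rintro t ⟨v, -, -, rfl⟩
  refine mul_nonneg (div_nonneg (integral_nonneg fun x => eDens_nonneg hk hs v x)
    (integral_nonneg fun x => mul_nonneg (Real.rpow_nonneg (hu0 x).le _) (sq_nonneg _)))
    (Real.rpow_nonneg (integral_nonneg fun x => Real.rpow_nonneg (hu0 x).le _) _)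

/-! ### The limit -/

/-- For `m ≥ 2`, `n ≥ 1`, `k = m + n` and `s > 0`,
`lim_{L → +∞} Y²_per(L) = 2^{2/k} · Y_{n,k}(s)`. -/
theorem periodic_second_yamabe_limit (m n : ℕ) (hm : 2 ≤ m) (hn : 1 ≤ n)
    (s : ℝ) (hs : 0 < s) :
    Filter.Tendsto (fun L => y2Per n (m + n) s L) Filter.atTop
      (nhds (2 ^ ((2 : ℝ) / ((m + n : ℕ) : ℝ)) * yamabeConst n (m + n) s)) := by
  have hk : 3 ≤ m + n := by omega
  generalize m + n = k at hk
  have h2 : (0 : ℝ) < 2 ^ ((2 : ℝ) / (k : ℝ)) := by positivity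
  obtain ⟨φ, hφ, hφc, hφ0⟩ := exists_test_function n
  rw [tendsto_order]
  constructor
  · intro c hc
    rcases lt_or_ge c 0 with hc0 | hc0
    · exact Filter.Eventually.of_forall fun L =>
        hc0.trans_le (Real.sInf_nonneg fun r hr => y2PerSet_nonneg hk hs hr)
    have hc' : c / 2 ^ ((2 : ℝ) / (k : ℝ)) < yamabeConst n k s := by
      rwa [div_lt_iff₀' h2]
    obtain ⟨C, hcC, hCY⟩ := exists_between hc'
    have hC0 : 0 ≤ C := (div_nonneg hc0 h2.le).trans hcC.le
    -- competitors exist for large `L`, so that the infimum is over a nonempty set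
    filter_upwards [eventually_periodic_sobolev hk hs hC0 hCY,
      eventually_exists_mem_lt hn hk hs hφ hφc hφ0, Filter.eventually_gt_atTop 0] with L hS hne hL
    obtain ⟨r, hr, -⟩ := hne _ (lt_add_one _)
    refine ((div_lt_iff₀ h2).1 hcC).trans_le (le_csInf ⟨r, hr⟩ fun r' hr' => ?_)
    exact y2PerSet_ge hk hs hL hC0 hS hr'
  · intro c hc
    rw [gt_iff_lt, ← lt_div_iff₀' h2] at hc
    obtain ⟨r, ⟨ψ, hψ, hψc, hψ0, rfl⟩, hr⟩ := exists_lt_of_csInf_lt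
      (s := yamabeSet n k s) ⟨_, φ, hφ, hφc, hφ0, rfl⟩ hc
    filter_upwards [eventually_exists_mem_lt hn hk hs hψ hψc hψ0] with L hL
    obtain ⟨r', hr', hlt⟩ := hL c ((lt_div_iff₀' h2).1 hr)
    exact csInf_lt_of_lt ⟨0, fun _ hx => y2PerSet_nonneg hk hs hx⟩ hr' hlt
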